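/- arXiv:2401.09357 — 4 statements merged into one kernel-verified Lean document; each statement's English description precedes it below -/
import Mathlib

section
/- There exists a constant c > 0 such that for every t > 0 and every p ∈ ℝ, the function q ↦ |φ_t(p,q)| is integrable on ℝ and ∫_ℝ |φ_t(p,q)| dq ≤ c·√t. -/
open MeasureTheory Filter Topology

/-- The first-order Dyson kernel factor:
`φ_t(p,q) = (e^{it(p²−q²)} − 1)/(i(p²−q²))` if `p² ≠ q²`, and `t` otherwise. -/
noncomputable def phiK (t p q : ℝ) : ℂ :=
  if p ^ 2 = q ^ 2 then (t : ℂ)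
  else (Complex.exp (Complex.I * t * ((p : ℂ) ^ 2 - (q : ℂ) ^ 2)) - 1) /
    (Complex.I * ((p : ℂ) ^ 2 - (q : ℂ) ^ 2))

/-!
The quantity `|p² - q²| = |q - p| |q + p|` is at least the square of the distance from `q` to
`{p, -p}`. Hence a function of `q` whose norm is at most `M`, and at most `M γ² / |p² - q²|` away
from `q = ±p`, is dominated by `2πMγ` times the sum of the Cauchy densities of scale `γ` centred at
`p` and `-p`. Its integral is then at most `4πMγ`, whatever `p` is. The kernel `φ_t` satisfies both
bounds with `M = |t|` and `M γ² = 2`, that is `γ = √(2/|t|)`.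
-/

open scoped NNReal Real
open ProbabilityTheory

section CauchyMajorant

variable {M : ℝ} {γ : ℝ≥0}

lemma le_mul_cauchyPDFReal {y a x : ℝ} (hγ : γ ≠ 0) (h_bound : y ≤ M)
    (h_decay : y * (x - a) ^ 2 ≤ M * γ ^ 2) :
    y ≤ 2 * π * M * γ * cauchyPDFReal a γ x := by
  have h_eq : 2 * π * M * γ * cauchyPDFReal a γ x
      = 2 * (M * γ ^ 2) / ((x - a) ^ 2 + γ ^ 2) := by
    rw [cauchyPDFReal_def]
    field
  rw [h_eq, le_div_iff₀ (by positivity)]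
  calc y * ((x - a) ^ 2 + γ ^ 2) = y * (x - a) ^ 2 + y * γ ^ 2 := mul_add _ _ _
    _ ≤ M * γ ^ 2 + M * γ ^ 2 := by gcongr
    _ = 2 * (M * γ ^ 2) := (two_mul _).symm

lemma sq_sub_le_or_sq_add_le_abs_sq_sub_sq (p q : ℝ) :
    (q - p) ^ 2 ≤ |p ^ 2 - q ^ 2| ∨ (q + p) ^ 2 ≤ |p ^ 2 - q ^ 2| := by
  have h_factor : |p ^ 2 - q ^ 2| = |q - p| * |q + p| := by
    rw [← abs_mul, abs_sub_comm, sq_sub_sq, mul_comm]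
  rw [h_factor, ← sq_abs (q - p), ← sq_abs (q + p), sq, sq]
  refine (le_total |q - p| |q + p|).imp (fun h ↦ ?_) (fun h ↦ ?_) <;> gcongr

lemma le_mul_cauchyPDFReal_add_cauchyPDFReal_neg {y p q : ℝ} (hγ : γ ≠ 0) (hy : 0 ≤ y)
    (h_bound : y ≤ M) (h_decay : y * |p ^ 2 - q ^ 2| ≤ M * γ ^ 2) :
    y ≤ 2 * π * M * γ * (cauchyPDFReal p γ q + cauchyPDFReal (-p) γ q) := by
  have hM : 0 ≤ M := hy.trans h_bound
  have h_le : ∀ a, (q - a) ^ 2 ≤ |p ^ 2 - q ^ 2| → y ≤ 2 * π * M * γ * cauchyPDFReal a γ q :=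
    fun a ha ↦ le_mul_cauchyPDFReal hγ h_bound
      ((mul_le_mul_of_nonneg_left ha hy).trans h_decay)
  rcases sq_sub_le_or_sq_add_le_abs_sq_sub_sq p q with h | h
  · refine (h_le p h).trans ?_
    gcongr
    exact le_add_of_nonneg_right (cauchyPDF_pos _ hγ q).le
  · refine (h_le (-p) (by rwa [sub_neg_eq_add])).trans ?_
    gcongr
    exact le_add_of_nonneg_left (cauchyPDF_pos _ hγ q).le

variable {E : Type*} [NormedAddCommGroup E] {f : ℝ → E} {p : ℝ}

theorem integrable_of_norm_mul_abs_sq_sub_sq_le (hf : AEStronglyMeasurable f) (hγ : γ ≠ 0)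
    (h_bound : ∀ q, ‖f q‖ ≤ M) (h_decay : ∀ q, ‖f q‖ * |p ^ 2 - q ^ 2| ≤ M * γ ^ 2) :
    Integrable f :=
  (((integrable_cauchyPDFReal p).add (integrable_cauchyPDFReal (-p))).const_mul _).mono' hf <|
    ae_of_all _ fun q ↦ le_mul_cauchyPDFReal_add_cauchyPDFReal_neg hγ (norm_nonneg _)
      (h_bound q) (h_decay q)

theorem integral_norm_le_of_norm_mul_abs_sq_sub_sq_le (hγ : γ ≠ 0)
    (h_bound : ∀ q, ‖f q‖ ≤ M) (h_decay : ∀ q, ‖f q‖ * |p ^ 2 - q ^ 2| ≤ M * γ ^ 2) :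
    ∫ q, ‖f q‖ ≤ 4 * π * M * γ := by
  have h_int (a : ℝ) : Integrable (cauchyPDFReal a γ) := integrable_cauchyPDFReal a
  calc ∫ q, ‖f q‖
      ≤ ∫ q, 2 * π * M * γ * (cauchyPDFReal p γ q + cauchyPDFReal (-p) γ q) :=
        integral_mono_of_nonneg (ae_of_all _ fun q ↦ norm_nonneg _)
          (((h_int p).add (h_int (-p))).const_mul _)
          (ae_of_all _ fun q ↦ le_mul_cauchyPDFReal_add_cauchyPDFReal_neg hγ (norm_nonneg _)
            (h_bound q) (h_decay q))
    _ = 2 * π * M * γ * (1 + 1) := by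
        rw [integral_const_mul, integral_add (h_int p) (h_int (-p)),
          integral_cauchyPDFReal_eq_one _ hγ, integral_cauchyPDFReal_eq_one _ hγ]
    _ = 4 * π * M * γ := by ring

end CauchyMajorant

section DysonKernel

lemma measurable_phiK (t p : ℝ) : Measurable (phiK t p) :=
  Measurable.ite (measurableSet_eq_fun (by fun_prop) (by fun_prop)) (by fun_prop) (by fun_prop)

lemma phiK_zero_left (p q : ℝ) : phiK 0 p q = 0 := by
  simp [phiK]

lemma norm_phiK_mul_abs_sq_sub_sq (t p q : ℝ) :
    ‖phiK t p q‖ * |p ^ 2 - q ^ 2| = 2 * |Real.sin (t * (p ^ 2 - q ^ 2) / 2)| := by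
  by_cases h : p ^ 2 = q ^ 2
  · simp [h]
  have h_pos : 0 < |p ^ 2 - q ^ 2| := abs_pos.mpr (sub_ne_zero.mpr h)
  have h_phase : Complex.I * t * ((p : ℂ) ^ 2 - (q : ℂ) ^ 2)
      = Complex.I * ((t * (p ^ 2 - q ^ 2) : ℝ) : ℂ) := by
    push_cast
    ring
  have h_denom : ‖Complex.I * ((p : ℂ) ^ 2 - (q : ℂ) ^ 2)‖ = |p ^ 2 - q ^ 2| := by
    rw [norm_mul, Complex.norm_I, one_mul, ← Real.norm_eq_abs]
    exact_mod_cast Complex.norm_real _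
  rw [phiK, if_neg h, norm_div, h_denom, div_mul_cancel₀ _ h_pos.ne', h_phase,
    Complex.norm_exp_I_mul_ofReal_sub_one, norm_mul, Real.norm_two, Real.norm_eq_abs]

lemma norm_phiK_mul_abs_sq_sub_sq_le_two (t p q : ℝ) : ‖phiK t p q‖ * |p ^ 2 - q ^ 2| ≤ 2 := by
  rw [norm_phiK_mul_abs_sq_sub_sq]
  linarith [Real.abs_sin_le_one (t * (p ^ 2 - q ^ 2) / 2)]

lemma norm_phiK_le_abs (t p q : ℝ) : ‖phiK t p q‖ ≤ |t| := by
  by_cases h : p ^ 2 = q ^ 2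
  · simp [phiK, h]
  refine le_of_mul_le_mul_right ?_ (abs_pos.mpr (sub_ne_zero.mpr h))
  calc ‖phiK t p q‖ * |p ^ 2 - q ^ 2|
      = 2 * |Real.sin (t * (p ^ 2 - q ^ 2) / 2)| := norm_phiK_mul_abs_sq_sub_sq t p q
    _ ≤ 2 * |t * (p ^ 2 - q ^ 2) / 2| := mul_le_mul_of_nonneg_left Real.abs_sin_le_abs zero_le_two
    _ = |t| * |p ^ 2 - q ^ 2| := by rw [abs_div, abs_mul, abs_two]; ring

theorem phiK_L1_bound_general (t p : ℝ) :
    Integrable (phiK t p) ∧ ∫ q, ‖phiK t p q‖ ≤ 4 * π * √2 * √|t| := by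
  rcases eq_or_ne t 0 with rfl | ht
  · simp [funext (phiK_zero_left p)]
  let γ : ℝ≥0 := NNReal.sqrt (2 / ‖t‖₊)
  have hγ : γ ≠ 0 := by simp [γ, ht]
  have hγ_coe : (γ : ℝ) = √2 / √|t| := by simp [γ]
  have hγ_sq : |t| * (γ : ℝ) ^ 2 = 2 := by
    rw [hγ_coe, div_pow, Real.sq_sqrt zero_le_two, Real.sq_sqrt (abs_nonneg t),
      mul_div_cancel₀ _ (abs_ne_zero.mpr ht)]
  have h_decay (q : ℝ) : ‖phiK t p q‖ * |p ^ 2 - q ^ 2| ≤ |t| * γ ^ 2 :=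
    (norm_phiK_mul_abs_sq_sub_sq_le_two t p q).trans_eq hγ_sq.symm
  refine ⟨integrable_of_norm_mul_abs_sq_sub_sq_le (measurable_phiK t p).aestronglyMeasurable hγ
    (norm_phiK_le_abs t p) h_decay, ?_⟩
  calc ∫ q, ‖phiK t p q‖ ≤ 4 * π * |t| * γ :=
        integral_norm_le_of_norm_mul_abs_sq_sub_sq_le hγ (norm_phiK_le_abs t p) h_decay
    _ = 4 * π * √2 * (|t| / √|t|) := by rw [hγ_coe]; ring
    _ = 4 * π * √2 * √|t| := by rw [Real.div_sqrt]

end DysonKernel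

/-- Hughes–Schlag, Theorem 2.3: there is `c > 0` with
`∫ |φ_t(p,q)| dq ≤ c √t`, uniformly in `p`. -/
theorem phiK_L1_bound :
    ∃ c : ℝ, 0 < c ∧ ∀ t : ℝ, 0 < t → ∀ p : ℝ,
      Integrable (fun q : ℝ => ‖phiK t p q‖) ∧
      (∫ q : ℝ, ‖phiK t p q‖) ≤ c * Real.sqrt t := by
  refine ⟨4 * π * √2, by positivity, fun t ht p ↦ ?_⟩
  simpa only [abs_of_pos ht] using (phiK_L1_bound_general t p).imp_left Integrable.norm
end

section
/- Let v : ℝ → ℂ be measurable and bounded, with conj(v(p)) = v(−p) for all p. Define kernels K_{t,n}[v] recursively by K_{t,1}[v](p,q) = φ_t(p,q) · v(p−q)/√(2π) and, for n ≥ 2, K_{t,n}[v](p,q) = ∫₀^t ∫_ℝ K_{s,n−1}[v](p,z) e^{is(z²−q²)} v(z−q)/√(2π) dz ds. Then for every n ≥ 1 and every t > 0, sup_{p∈ℝ} ∫_ℝ |K_{t,n}[v](p,q)| dq is finite. -/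
open MeasureTheory Filter Topology

/-- The Dyson expansion kernels: `dysonKernel v n` is the `(n+1)`-st kernel `K_{·,n+1}[v]`,
so `dysonKernel v 0 t p q = φ_t(p,q) v(p−q)/√(2π)` and
`dysonKernel v (n+1) t p q = ∫₀ᵗ ∫ K_{s,n+1}[v](p,z) e^{is(z²−q²)} v(z−q)/√(2π) dz ds`. -/
noncomputable def dysonKernel (v : ℝ → ℂ) : ℕ → ℝ → ℝ → ℝ → ℂ
  | 0 => fun t p q => phiK t p q * v (p - q) / ((Real.sqrt (2 * Real.pi) : ℝ) : ℂ)
  | n + 1 => fun t p q =>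
      ∫ s in (0 : ℝ)..t, ∫ z : ℝ,
        dysonKernel v n s p z * Complex.exp (Complex.I * s * ((z : ℂ) ^ 2 - (q : ℂ) ^ 2)) *
          v (z - q) / ((Real.sqrt (2 * Real.pi) : ℝ) : ℂ)

/-!
Carrying out the time integrals turns the `n`-th kernel into `e^{-itq²}` times an integral over the
intermediate momenta of a product of bounded potential factors and an oscillatory integral over the
time simplex whose frequencies are the squared momenta. That oscillatory integral is a divided
difference: multiplying it by the gap between its end nodes gives the difference of the two
integrals with one end node removed. Hence it is at most `(1 + |p² - q²|)⁻¹` times lower-order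
integrals depending on `p` alone or on `q` alone. As `∫ (1 + |p² - q²|)⁻¹ dq ≤ 2π` uniformly in
`p`, its row and column `L¹` norms are bounded by a simultaneous induction on the order.
-/

open Complex (I)
open scoped ENNReal

section Simplex

/-- The oscillatory integral of `exp (i (s₀ a₀ + ⋯ + sₙ aₙ))` over the time simplex
`s₀ + ⋯ + sₙ = t`, `sⱼ ≥ 0`, written as an iterated Duhamel integral. Up to the factor `iⁿ` it is
the divided difference of `λ ↦ exp (i t λ)` at the nodes `a₀, …, aₙ`. -/
noncomputable def simplexPhase : {n : ℕ} → (Fin (n + 1) → ℝ) → ℝ → ℂ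
  | 0, a, t => Complex.exp (I * (t * a 0 : ℝ))
  | _ + 1, a, t =>
      ∫ s in (0 : ℝ)..t, Complex.exp (I * ((t - s) * a 0 : ℝ)) * simplexPhase (Fin.tail a) s

variable {n : ℕ}

lemma continuous_uncurry_simplexPhase :
    Continuous fun y : (Fin (n + 1) → ℝ) × ℝ ↦ simplexPhase y.1 y.2 := by
  induction n with
  | zero => simp only [simplexPhase]; fun_prop
  | succ n ih =>
    simp only [simplexPhase]
    refine intervalIntegral.continuous_parametric_intervalIntegral_of_continuous
      (f := fun (y : (Fin (n + 2) → ℝ) × ℝ) s ↦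
        Complex.exp (I * ((y.2 - s) * y.1 0 : ℝ)) * simplexPhase (Fin.tail y.1) s)
      (Continuous.mul (by fun_prop) ?_) continuous_snd
    exact ih.comp (f := fun y : ((Fin (n + 2) → ℝ) × ℝ) × ℝ ↦ (Fin.tail y.1.1, y.2))
      (by unfold Fin.tail; fun_prop)

@[fun_prop]
lemma continuous_simplexPhase {X : Type*} [TopologicalSpace X] {a : X → Fin (n + 1) → ℝ}
    {t : X → ℝ} (ha : Continuous a) (ht : Continuous t) :
    Continuous fun x ↦ simplexPhase (a x) (t x) :=
  continuous_uncurry_simplexPhase.comp (ha.prodMk ht)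

lemma hasDerivAt_exp_I_mul (c t : ℝ) :
    HasDerivAt (fun s : ℝ ↦ Complex.exp (I * (s * c : ℝ)))
      (I * c * Complex.exp (I * (t * c : ℝ))) t := by
  have h : HasDerivAt (fun s : ℝ ↦ I * ((s * c : ℝ) : ℂ)) (I * c) t := by
    simpa using ((hasDerivAt_id t).mul_const c).ofReal_comp.const_mul I
  simpa only [mul_comm] using h.cexp

lemma simplexPhase_succ_eq_exp_mul (a : Fin (n + 2) → ℝ) (t : ℝ) :
    simplexPhase a t = Complex.exp (I * (t * a 0 : ℝ)) *
      ∫ s in (0 : ℝ)..t, Complex.exp (-(I * (s * a 0 : ℝ))) * simplexPhase (Fin.tail a) s := by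
  rw [simplexPhase, ← intervalIntegral.integral_const_mul]
  congr 1 with s
  rw [← mul_assoc, ← Complex.exp_add]
  push_cast
  ring_nf

lemma hasDerivAt_simplexPhase_head (a : Fin (n + 2) → ℝ) (t : ℝ) :
    HasDerivAt (simplexPhase a) (I * a 0 * simplexPhase a t + simplexPhase (Fin.tail a) t) t := by
  have hcont : Continuous fun s : ℝ ↦
      Complex.exp (-(I * (s * a 0 : ℝ))) * simplexPhase (Fin.tail a) s := by fun_prop
  have h := (hasDerivAt_exp_I_mul (a 0) t).mul (hcont.integral_hasStrictDerivAt 0 t).hasDerivAt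
  rw [funext (simplexPhase_succ_eq_exp_mul a)]
  refine h.congr_deriv ?_
  rw [← mul_assoc, ← mul_assoc, ← Complex.exp_add, add_neg_cancel, Complex.exp_zero, one_mul]

lemma eq_zero_of_hasDerivAt_const_mul {c : ℂ} {g : ℝ → ℂ}
    (hg : ∀ t, HasDerivAt g (c * g t) t) (h0 : g 0 = 0) (t : ℝ) : g t = 0 := by
  have hd (s : ℝ) : HasDerivAt (fun r : ℝ ↦ Complex.exp (-c * r) * g r) 0 s := by
    have he : HasDerivAt (fun r : ℝ ↦ -c * (r : ℂ)) (-c) s := by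
      simpa using (hasDerivAt_id s).ofReal_comp.const_mul (-c)
    exact (he.cexp.mul (hg s)).congr_deriv (by ring)
  have h := is_const_of_deriv_eq_zero (fun s ↦ (hd s).differentiableAt) (fun s ↦ (hd s).deriv) t 0
  simpa [h0] using h

lemma mul_simplexPhase_eq_sub (a : Fin (n + 2) → ℝ) (t : ℝ) :
    I * (a 0 - a (Fin.last _)) * simplexPhase a t =
      simplexPhase (Fin.init a) t - simplexPhase (Fin.tail a) t := by
  rw [← sub_eq_zero]
  revert t
  -- The defect `g` solves `g' = i a₀ g`, the inhomogeneity being the defect for `Fin.tail a`.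
  induction n with
  | zero =>
    apply eq_zero_of_hasDerivAt_const_mul (c := I * a 0)
    · intro t
      refine (((hasDerivAt_simplexPhase_head a t).const_mul _).sub
        ((hasDerivAt_exp_I_mul (a 0) t).sub
          (hasDerivAt_exp_I_mul (a (Fin.last 1)) t))).congr_deriv ?_
      have hinit : simplexPhase (Fin.init a) t = Complex.exp (I * (t * a 0 : ℝ)) := rfl
      have htail : simplexPhase (Fin.tail a) t = Complex.exp (I * (t * a (Fin.last 1) : ℝ)) := rfl
      rw [hinit, htail]
      ring
    · simp [simplexPhase]
  | succ n ih =>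
    apply eq_zero_of_hasDerivAt_const_mul (c := I * a 0)
    · intro t
      refine (((hasDerivAt_simplexPhase_head a t).const_mul _).sub
        ((hasDerivAt_simplexPhase_head (Fin.init a) t).sub
          (hasDerivAt_simplexPhase_head (Fin.tail a) t))).congr_deriv ?_
      have hinit : Fin.init a 0 = a 0 := rfl
      have htail : Fin.tail a (Fin.last _) = a (Fin.last _) := rfl
      have ih_tail := ih (Fin.tail a) t
      rw [htail] at ih_tail
      rw [hinit, Fin.tail_init_eq_init_tail]
      linear_combination ih_tail
    · simp [simplexPhase]

lemma hasDerivAt_simplexPhase_last (a : Fin (n + 2) → ℝ) (t : ℝ) :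
    HasDerivAt (simplexPhase a)
      (I * a (Fin.last _) * simplexPhase a t + simplexPhase (Fin.init a) t) t :=
  (hasDerivAt_simplexPhase_head a t).congr_deriv <| by
    linear_combination mul_simplexPhase_eq_sub a t

lemma integral_exp_mul_simplexPhase_init (a : Fin (n + 2) → ℝ) (t : ℝ) :
    ∫ s in (0 : ℝ)..t, Complex.exp (I * (s * -a (Fin.last _) : ℝ)) * simplexPhase (Fin.init a) s =
      Complex.exp (I * (t * -a (Fin.last _) : ℝ)) * simplexPhase a t := by
  have hcont : Continuous fun s : ℝ ↦
      Complex.exp (I * (s * -a (Fin.last _) : ℝ)) * simplexPhase (Fin.init a) s := by fun_prop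
  rw [intervalIntegral.integral_eq_sub_of_hasDerivAt (fun s _ ↦ ?_)
    (hcont.intervalIntegrable 0 t) (f := fun s ↦
      Complex.exp (I * (s * -a (Fin.last _) : ℝ)) * simplexPhase a s)]
  · simp [simplexPhase]
  · refine ((hasDerivAt_exp_I_mul _ s).mul (hasDerivAt_simplexPhase_last a s)).congr_deriv ?_
    push_cast
    ring

lemma enorm_simplexPhase_le_lintegral (a : Fin (n + 2) → ℝ) (t : ℝ) :
    ‖simplexPhase a t‖ₑ ≤ ∫⁻ s in Set.uIoc 0 t, ‖simplexPhase (Fin.tail a) s‖ₑ := by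
  rw [← ofReal_norm, simplexPhase, intervalIntegral.norm_intervalIntegral_eq, ofReal_norm]
  refine (enorm_integral_le_lintegral_enorm _).trans_eq ?_
  simp_rw [enorm_mul, Complex.enorm_exp_I_mul_ofReal, one_mul]

lemma enorm_simplexPhase_le (a : Fin (n + 2) → ℝ) (t : ℝ) :
    ‖simplexPhase a t‖ₑ ≤ (1 + ‖a 0 - a (Fin.last _)‖ₑ)⁻¹ *
      (‖simplexPhase (Fin.init a) t‖ₑ + ‖simplexPhase (Fin.tail a) t‖ₑ +
        ∫⁻ s in Set.uIoc 0 t, ‖simplexPhase (Fin.tail a) s‖ₑ) := by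
  rw [← ENNReal.mul_le_iff_le_inv (by simp) (by finiteness), add_mul, one_mul, add_comm]
  gcongr
  · have h : ‖I * (a 0 - a (Fin.last _)) * simplexPhase a t‖ₑ =
        ‖a 0 - a (Fin.last _)‖ₑ * ‖simplexPhase a t‖ₑ := by
      rw [enorm_mul, enorm_mul, ← Complex.ofReal_sub]
      simp only [← ofReal_norm, Complex.norm_I, Complex.norm_real, ENNReal.ofReal_one, one_mul]
    rw [← h, mul_simplexPhase_eq_sub]
    exact enorm_sub_le
  · exact enorm_simplexPhase_le_lintegral a t

end Simplex

section Pi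

variable {α E : Type*} [MeasureSpace α] [SigmaFinite (volume : Measure α)] {n : ℕ}

lemma lintegral_pi_insertNth (i : Fin (n + 1)) {f : (Fin (n + 1) → α) → ℝ≥0∞}
    (hf : Measurable f) :
    ∫⁻ y, f y = ∫⁻ x : α, ∫⁻ z : Fin n → α, f (i.insertNth x z) := by
  let e := (MeasurableEquiv.piFinSuccAbove (fun _ : Fin (n + 1) ↦ α) i).symm
  have he : MeasurePreserving e := (volume_preserving_piFinSuccAbove (fun _ ↦ α) i).symm _
  rw [← he.lintegral_comp hf, Measure.volume_eq_prod, ← Function.comp_def f e,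
    lintegral_prod _ (hf.comp e.measurable).aemeasurable]
  rfl

lemma integral_pi_insertNth [NormedAddCommGroup E] [NormedSpace ℝ E] (i : Fin (n + 1))
    {f : (Fin (n + 1) → α) → E} (hf : Integrable f) :
    ∫ y, f y = ∫ x : α, ∫ z : Fin n → α, f (i.insertNth x z) := by
  let e := (MeasurableEquiv.piFinSuccAbove (fun _ : Fin (n + 1) ↦ α) i).symm
  have he : MeasurePreserving e := (volume_preserving_piFinSuccAbove (fun _ ↦ α) i).symm _
  rw [← he.integral_comp', Measure.volume_eq_prod, ← Function.comp_def f e,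
    integral_prod _ ((he.integrable_comp_emb e.measurableEmbedding).2 hf)]
  rfl

end Pi

lemma inv_one_add_abs_mul_le (x y : ℝ) :
    (1 + |x * y|)⁻¹ ≤ (1 + x ^ 2)⁻¹ + (1 + y ^ 2)⁻¹ := by
  wlog h : |x| ≤ |y| generalizing x y
  · rw [mul_comm, add_comm (1 + x ^ 2)⁻¹]
    exact this y x (le_of_not_ge h)
  have hx : x ^ 2 ≤ |x * y| := by
    rw [← sq_abs, abs_mul, sq]
    gcongr
  calc (1 + |x * y|)⁻¹ ≤ (1 + x ^ 2)⁻¹ := by gcongr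
    _ ≤ _ := le_add_of_nonneg_right (by positivity)

lemma lintegral_inv_one_add_enorm_sq_sub_sq_le (p : ℝ) :
    ∫⁻ q : ℝ, (1 + ‖p ^ 2 - q ^ 2‖ₑ)⁻¹ ≤ ENNReal.ofReal (2 * Real.pi) := by
  have hsub : Integrable fun q : ℝ ↦ (1 + (q - p) ^ 2)⁻¹ :=
    integrable_inv_one_add_sq.comp_sub_right p
  have hadd : Integrable fun q : ℝ ↦ (1 + (q + p) ^ 2)⁻¹ :=
    integrable_inv_one_add_sq.comp_add_right p
  have hle (q : ℝ) : (1 + ‖p ^ 2 - q ^ 2‖ₑ)⁻¹ ≤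
      ENNReal.ofReal ((1 + (q - p) ^ 2)⁻¹ + (1 + (q + p) ^ 2)⁻¹) := by
    rw [Real.enorm_eq_ofReal_abs, ← ENNReal.ofReal_one,
      ← ENNReal.ofReal_add zero_le_one (abs_nonneg _),
      ← ENNReal.ofReal_inv_of_pos (by positivity), abs_sub_comm]
    refine ENNReal.ofReal_le_ofReal ?_
    convert inv_one_add_abs_mul_le (q - p) (q + p) using 4
    ring
  calc ∫⁻ q : ℝ, (1 + ‖p ^ 2 - q ^ 2‖ₑ)⁻¹
      ≤ ∫⁻ q : ℝ, ENNReal.ofReal ((1 + (q - p) ^ 2)⁻¹ + (1 + (q + p) ^ 2)⁻¹) :=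
        lintegral_mono hle
    _ = ENNReal.ofReal (∫ q : ℝ, ((1 + (q - p) ^ 2)⁻¹ + (1 + (q + p) ^ 2)⁻¹)) :=
        (ofReal_integral_eq_lintegral_ofReal (hsub.add hadd)
          (.of_forall fun q ↦ add_nonneg (by positivity) (by positivity))).symm
    _ = ENNReal.ofReal (2 * Real.pi) := by
        rw [integral_add hsub hadd, integral_sub_right_eq_self (fun q : ℝ ↦ (1 + q ^ 2)⁻¹),
          integral_add_right_eq_self (fun q : ℝ ↦ (1 + q ^ 2)⁻¹), integral_univ_inv_one_add_sq,
          two_mul]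

section Paths

variable {n : ℕ}

/-- The momentum path `p, z₀, …, zₙ₋₁, q` of a Dyson term: incoming momentum `p`, intermediate
momenta `z`, outgoing momentum `q`. -/
def momentumPath (p : ℝ) (z : Fin n → ℝ) (q : ℝ) : Fin (n + 2) → ℝ :=
  Fin.cons p (Fin.snoc z q)

lemma momentumPath_eq_snoc (p : ℝ) (z : Fin n → ℝ) (q : ℝ) :
    momentumPath p z q = Fin.snoc (Fin.cons p z : Fin (n + 1) → ℝ) q :=
  Fin.cons_snoc_eq_snoc_cons p z q

lemma momentumPath_last (p : ℝ) (z : Fin n → ℝ) (q : ℝ) :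
    momentumPath p z q (Fin.last _) = q := by
  rw [momentumPath_eq_snoc, Fin.snoc_last]

lemma init_momentumPath_sq (p : ℝ) (z : Fin n → ℝ) (q : ℝ) :
    Fin.init (momentumPath p z q ^ 2) = (Fin.cons p z : Fin (n + 1) → ℝ) ^ 2 := by
  calc Fin.init (momentumPath p z q ^ 2) = Fin.init (momentumPath p z q) ^ 2 := rfl
    _ = _ := by rw [momentumPath_eq_snoc, Fin.init_snoc]

@[fun_prop]
lemma continuous_momentumPath {X : Type*} [TopologicalSpace X] {p q : X → ℝ} {z : X → Fin n → ℝ}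
    (hp : Continuous p) (hz : Continuous z) (hq : Continuous q) :
    Continuous fun x ↦ momentumPath (p x) (z x) (q x) :=
  hp.finCons (hz.finSnoc hq)

lemma enorm_simplexPhase_momentumPath_le (p : ℝ) (z : Fin n → ℝ) (q t : ℝ) :
    ‖simplexPhase (momentumPath p z q ^ 2) t‖ₑ ≤ (1 + ‖p ^ 2 - q ^ 2‖ₑ)⁻¹ *
      (‖simplexPhase (Fin.cons p z ^ 2 : Fin (n + 1) → ℝ) t‖ₑ +
        ‖simplexPhase (Fin.snoc z q ^ 2 : Fin (n + 1) → ℝ) t‖ₑ +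
        ∫⁻ s in Set.uIoc 0 t, ‖simplexPhase (Fin.snoc z q ^ 2 : Fin (n + 1) → ℝ) s‖ₑ) := by
  have h := enorm_simplexPhase_le (momentumPath p z q ^ 2) t
  have htail : Fin.tail (momentumPath p z q ^ 2) = Fin.snoc z q ^ 2 := rfl
  have hzero : (momentumPath p z q ^ 2) 0 = p ^ 2 := rfl
  rwa [init_momentumPath_sq, htail, hzero, Pi.pow_apply, momentumPath_last] at h

lemma abs_le_of_mem_uIoc_zero {s t : ℝ} (hs : s ∈ Set.uIoc 0 t) : |s| ≤ |t| := by
  simpa using Set.abs_sub_left_of_mem_uIcc (Set.uIoc_subset_uIcc hs)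

lemma lintegral_enorm_simplexPhase_momentumPath_le {p q t T : ℝ} {C : ℝ≥0∞} (ht : |t| ≤ T)
    (hrow : ∫⁻ z : Fin n → ℝ, ‖simplexPhase (Fin.cons p z ^ 2 : Fin (n + 1) → ℝ) t‖ₑ ≤ C)
    (hcol : ∀ s, |s| ≤ T →
      ∫⁻ z : Fin n → ℝ, ‖simplexPhase (Fin.snoc z q ^ 2 : Fin (n + 1) → ℝ) s‖ₑ ≤ C) :
    ∫⁻ z : Fin n → ℝ, ‖simplexPhase (momentumPath p z q ^ 2) t‖ₑ ≤
      (1 + ‖p ^ 2 - q ^ 2‖ₑ)⁻¹ * (ENNReal.ofReal (2 + T) * C) := by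
  have hT : 0 ≤ T := (abs_nonneg t).trans ht
  have htime : ∫⁻ z : Fin n → ℝ, ∫⁻ s in Set.uIoc 0 t,
      ‖simplexPhase (Fin.snoc z q ^ 2 : Fin (n + 1) → ℝ) s‖ₑ ≤ ENNReal.ofReal T * C := by
    have hcont : Continuous fun x : (Fin n → ℝ) × ℝ ↦
        simplexPhase (Fin.snoc x.1 q ^ 2 : Fin (n + 1) → ℝ) x.2 := by fun_prop
    rw [lintegral_lintegral_swap hcont.measurable.enorm.aemeasurable]
    calc ∫⁻ s in Set.uIoc 0 t, ∫⁻ z : Fin n → ℝ,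
          ‖simplexPhase (Fin.snoc z q ^ 2 : Fin (n + 1) → ℝ) s‖ₑ
        ≤ ∫⁻ _ in Set.uIoc 0 t, C := by
          refine setLIntegral_mono measurable_const fun s hs ↦ ?_
          exact hcol s ((abs_le_of_mem_uIoc_zero hs).trans ht)
      _ = C * ENNReal.ofReal |t| := by rw [setLIntegral_const, Real.volume_uIoc, sub_zero]
      _ ≤ ENNReal.ofReal T * C := by rw [mul_comm]; gcongr
  refine (lintegral_mono fun z ↦ enorm_simplexPhase_momentumPath_le p z q t).trans ?_
  have hinit : Continuous fun z ↦ simplexPhase (Fin.cons p z ^ 2 : Fin (n + 1) → ℝ) t := by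
    fun_prop
  rw [lintegral_const_mul' _ _ (by simp), lintegral_add_left (by fun_prop),
    lintegral_add_left hinit.enorm.measurable, ENNReal.ofReal_add zero_le_two hT, add_mul,
    ENNReal.ofReal_ofNat, two_mul]
  gcongr
  exact hcol t ht

lemma lintegral_enorm_simplexPhase_le (T : ℝ) :
    ∀ n : ℕ, ∀ t, |t| ≤ T →
      (∀ p : ℝ, ∫⁻ z : Fin n → ℝ, ‖simplexPhase (Fin.cons p z ^ 2 : Fin (n + 1) → ℝ) t‖ₑ ≤
        (ENNReal.ofReal (2 * Real.pi) * ENNReal.ofReal (2 + T)) ^ n) ∧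
      ∀ q : ℝ, ∫⁻ z : Fin n → ℝ, ‖simplexPhase (Fin.snoc z q ^ 2 : Fin (n + 1) → ℝ) t‖ₑ ≤
        (ENNReal.ofReal (2 * Real.pi) * ENNReal.ofReal (2 + T)) ^ n
  | 0, t, _ => by
    simp [simplexPhase, volume_pi, Measure.pi_empty_univ, -Complex.ofReal_mul,
      Complex.enorm_exp_I_mul_ofReal]
  | n + 1, t, ht => by
    have ih := lintegral_enorm_simplexPhase_le T n
    have hpath (p q : ℝ) := lintegral_enorm_simplexPhase_momentumPath_le ht ((ih t ht).1 p)
      fun s hs ↦ (ih s hs).2 q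
    have hsum (p : ℝ) : ∫⁻ q : ℝ, (1 + ‖p ^ 2 - q ^ 2‖ₑ)⁻¹ * (ENNReal.ofReal (2 + T) *
          (ENNReal.ofReal (2 * Real.pi) * ENNReal.ofReal (2 + T)) ^ n) ≤
        (ENNReal.ofReal (2 * Real.pi) * ENNReal.ofReal (2 + T)) ^ (n + 1) := by
      rw [lintegral_mul_const' _ _ (by finiteness),
        pow_succ' (ENNReal.ofReal (2 * Real.pi) * ENNReal.ofReal (2 + T)), mul_assoc]
      gcongr
      exact lintegral_inv_one_add_enorm_sq_sub_sq_le p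
    constructor
    · intro p
      have hcont : Continuous fun z ↦ simplexPhase (Fin.cons p z ^ 2 : Fin (n + 2) → ℝ) t := by
        fun_prop
      rw [lintegral_pi_insertNth (Fin.last n) hcont.enorm.measurable]
      simp only [Fin.insertNth_last']
      exact (lintegral_mono fun q ↦ hpath p q).trans (hsum p)
    · intro q
      have hcont : Continuous fun z ↦ simplexPhase (Fin.snoc z q ^ 2 : Fin (n + 2) → ℝ) t := by
        fun_prop
      rw [lintegral_pi_insertNth 0 hcont.enorm.measurable]
      simp only [Fin.insertNth_zero', ← momentumPath_eq_snoc]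
      refine (lintegral_mono fun p ↦ hpath p q).trans ?_
      simp_rw [enorm_sub_rev _ (q ^ 2)]
      exact hsum q

end Paths

section Dyson

variable {v : ℝ → ℂ} {C : ℝ} {n : ℕ}

/-- The potential factor `∏ⱼ v(xⱼ − xⱼ₊₁)/√(2π)` that a momentum path `x₀, …, xₙ` collects. -/
noncomputable def pathWeight (v : ℝ → ℂ) (x : Fin (n + 1) → ℝ) : ℂ :=
  ∏ i : Fin n, v (x i.castSucc - x i.succ) / ((Real.sqrt (2 * Real.pi) : ℝ) : ℂ)

lemma pathWeight_snoc (v : ℝ → ℂ) (x : Fin (n + 1) → ℝ) (q : ℝ) :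
    pathWeight v (Fin.snoc x q : Fin (n + 2) → ℝ) =
      pathWeight v x * (v (x (Fin.last n) - q) / ((Real.sqrt (2 * Real.pi) : ℝ) : ℂ)) := by
  simp only [pathWeight, Fin.prod_univ_castSucc, Fin.snoc_castSucc, Fin.succ_castSucc,
    Fin.succ_last, Fin.snoc_last]

lemma measurable_pathWeight (hv : Measurable v) :
    Measurable (pathWeight v : (Fin (n + 1) → ℝ) → ℂ) := by
  unfold pathWeight
  fun_prop

lemma norm_pathWeight_le (hC : ∀ p, ‖v p‖ ≤ C) (x : Fin (n + 1) → ℝ) :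
    ‖pathWeight v x‖ ≤ (C / Real.sqrt (2 * Real.pi)) ^ n := by
  rw [pathWeight, norm_prod, ← Fin.prod_const]
  refine Finset.prod_le_prod (fun _ _ ↦ norm_nonneg _) fun i _ ↦ ?_
  rw [norm_div, Complex.norm_of_nonneg (Real.sqrt_nonneg _)]
  gcongr
  exact hC _

lemma integrable_pathWeight_mul {X : Type*} [MeasurableSpace X] {μ : Measure X} {f : X → ℂ}
    {x : X → Fin (n + 1) → ℝ} (hv : Measurable v) (hC : ∀ p, ‖v p‖ ≤ C) (hx : Measurable x)
    (hf : Integrable f μ) : Integrable (fun a ↦ pathWeight v (x a) * f a) μ :=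
  hf.bdd_mul ((measurable_pathWeight hv).comp hx).aestronglyMeasurable
    (.of_forall fun a ↦ norm_pathWeight_le hC (x a))

lemma integrable_simplexPhase_cons (p t : ℝ) :
    Integrable fun z ↦ simplexPhase (Fin.cons p z ^ 2 : Fin (n + 1) → ℝ) t := by
  have hcont : Continuous fun z ↦ simplexPhase (Fin.cons p z ^ 2 : Fin (n + 1) → ℝ) t := by
    fun_prop
  exact ⟨hcont.aestronglyMeasurable,
    ((lintegral_enorm_simplexPhase_le |t| n t le_rfl).1 p).trans_lt (by finiteness)⟩

lemma integrable_exp_mul_simplexPhase_cons (p c t : ℝ) :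
    Integrable (fun x : ℝ × (Fin n → ℝ) ↦ Complex.exp (I * (x.1 * c : ℝ)) *
        simplexPhase (Fin.cons p x.2 ^ 2 : Fin (n + 1) → ℝ) x.1)
      ((volume.restrict (Set.uIoc 0 t)).prod volume) := by
  have hcont : Continuous fun x : ℝ × (Fin n → ℝ) ↦ Complex.exp (I * (x.1 * c : ℝ)) *
      simplexPhase (Fin.cons p x.2 ^ 2 : Fin (n + 1) → ℝ) x.1 := by fun_prop
  refine ⟨hcont.aestronglyMeasurable, ?_⟩
  rw [HasFiniteIntegral, lintegral_prod _ hcont.enorm.measurable.aemeasurable]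
  simp_rw [enorm_mul, Complex.enorm_exp_I_mul_ofReal, one_mul]
  calc ∫⁻ s in Set.uIoc 0 t, ∫⁻ z : Fin n → ℝ,
        ‖simplexPhase (Fin.cons p z ^ 2 : Fin (n + 1) → ℝ) s‖ₑ
      ≤ ∫⁻ _ in Set.uIoc 0 t,
          (ENNReal.ofReal (2 * Real.pi) * ENNReal.ofReal (2 + |t|)) ^ n := by
        refine setLIntegral_mono measurable_const fun s hs ↦ ?_
        exact (lintegral_enorm_simplexPhase_le |t| n s (abs_le_of_mem_uIoc_zero hs)).1 p
    _ < ⊤ := by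
        rw [setLIntegral_const, Real.volume_uIoc]
        finiteness

lemma phiK_eq_integral (t p q : ℝ) :
    phiK t p q = ∫ s in (0 : ℝ)..t, Complex.exp (I * (s * (p ^ 2 - q ^ 2) : ℝ)) := by
  rw [phiK]
  split_ifs with h
  · simp [h]
  · have hc : I * ((p : ℂ) ^ 2 - (q : ℂ) ^ 2) ≠ 0 :=
      mul_ne_zero Complex.I_ne_zero (sub_ne_zero.2 (mod_cast h))
    have hexp (s : ℝ) : Complex.exp (I * (s * (p ^ 2 - q ^ 2) : ℝ)) =
        Complex.exp (I * ((p : ℂ) ^ 2 - (q : ℂ) ^ 2) * s) := by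
      push_cast
      ring_nf
    simp_rw [hexp, integral_exp_mul_complex hc]
    simp [mul_right_comm]

lemma integral_exp_mul_simplexPhase_cons (p : ℝ) (z : Fin n → ℝ) (q t : ℝ) :
    ∫ s in (0 : ℝ)..t, Complex.exp (I * (s * -q ^ 2 : ℝ)) *
        simplexPhase (Fin.cons p z ^ 2 : Fin (n + 1) → ℝ) s =
      Complex.exp (I * (t * -q ^ 2 : ℝ)) * simplexPhase (momentumPath p z q ^ 2) t := by
  have h := integral_exp_mul_simplexPhase_init (momentumPath p z q ^ 2) t
  rwa [init_momentumPath_sq, Pi.pow_apply, momentumPath_last] at h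

lemma phiK_eq_exp_mul_simplexPhase (t p q : ℝ) (z : Fin 0 → ℝ) :
    phiK t p q =
      Complex.exp (I * (t * -q ^ 2 : ℝ)) * simplexPhase (momentumPath p z q ^ 2) t := by
  rw [phiK_eq_integral, ← integral_exp_mul_simplexPhase_cons]
  congr 1 with s
  rw [simplexPhase, ← Complex.exp_add]
  simp only [Pi.pow_apply, Fin.cons_zero]
  push_cast
  ring_nf

lemma pathWeight_momentumPath_snoc (v : ℝ → ℂ) (p : ℝ) (y : Fin n → ℝ) (z q : ℝ) :
    pathWeight v (momentumPath p (Fin.snoc y z : Fin (n + 1) → ℝ) q) =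
      pathWeight v (momentumPath p y z) *
        (v (z - q) / ((Real.sqrt (2 * Real.pi) : ℝ) : ℂ)) := by
  rw [momentumPath_eq_snoc, pathWeight_snoc]
  exact congrArg (fun r ↦ pathWeight v (momentumPath p y z) *
    (v (r - q) / ((Real.sqrt (2 * Real.pi) : ℝ) : ℂ))) (momentumPath_last p y z)

lemma integral_pathWeight_mul_exp_mul_simplexPhase (hv : Measurable v) (hC : ∀ p, ‖v p‖ ≤ C)
    (p q s : ℝ) :
    ∫ y : Fin (n + 1) → ℝ, pathWeight v (momentumPath p y q) *
        (Complex.exp (I * (s * -q ^ 2 : ℝ)) *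
          simplexPhase (Fin.cons p y ^ 2 : Fin (n + 2) → ℝ) s) =
      ∫ z : ℝ, (Complex.exp (I * (s * -z ^ 2 : ℝ)) * ∫ y : Fin n → ℝ,
          pathWeight v (momentumPath p y z) * simplexPhase (momentumPath p y z ^ 2) s) *
        Complex.exp (I * s * ((z : ℂ) ^ 2 - (q : ℂ) ^ 2)) * v (z - q) /
          ((Real.sqrt (2 * Real.pi) : ℝ) : ℂ) := by
  rw [integral_pi_insertNth (Fin.last n) (integrable_pathWeight_mul hv hC (by fun_prop)
    ((integrable_simplexPhase_cons p s).const_mul _))]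
  congr 1 with z
  have hexp : Complex.exp (I * (s * -q ^ 2 : ℝ)) = Complex.exp (I * (s * -z ^ 2 : ℝ)) *
      Complex.exp (I * s * ((z : ℂ) ^ 2 - (q : ℂ) ^ 2)) := by
    rw [← Complex.exp_add]
    push_cast
    ring_nf
  rw [← integral_const_mul, ← integral_mul_const, ← integral_mul_const, ← integral_div]
  congr 1 with y
  rw [Fin.insertNth_last', pathWeight_momentumPath_snoc, hexp, momentumPath]
  ring

lemma dysonKernel_eq_integral (hv : Measurable v) (hC : ∀ p, ‖v p‖ ≤ C) (n : ℕ) (t p q : ℝ) :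
    dysonKernel v n t p q = Complex.exp (I * (t * -q ^ 2 : ℝ)) *
      ∫ z : Fin n → ℝ,
        pathWeight v (momentumPath p z q) * simplexPhase (momentumPath p z q ^ 2) t := by
  induction n generalizing t q with
  | zero =>
    have hvolume : (volume : Measure (Fin 0 → ℝ)).real Set.univ = 1 := by
      rw [volume_pi, Measure.real, Measure.pi_empty_univ, ENNReal.toReal_one]
    have hweight (z : Fin 0 → ℝ) : pathWeight v (momentumPath p z q) =
        v (p - q) / ((Real.sqrt (2 * Real.pi) : ℝ) : ℂ) := Fin.prod_univ_one _
    rw [integral_unique, hvolume, one_smul, hweight, mul_left_comm,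
      ← phiK_eq_exp_mul_simplexPhase]
    simp only [dysonKernel]
    ring
  | succ n ih =>
    simp_rw [dysonKernel, ih, ← integral_pathWeight_mul_exp_mul_simplexPhase hv hC]
    rw [intervalIntegral_integral_swap (integrable_pathWeight_mul hv hC (by fun_prop)
      (integrable_exp_mul_simplexPhase_cons p (-q ^ 2) t)), ← integral_const_mul]
    congr 1 with y
    rw [intervalIntegral.integral_const_mul, integral_exp_mul_simplexPhase_cons]
    ring

lemma lintegral_enorm_dysonKernel_le (hv : Measurable v) (hC : ∀ p, ‖v p‖ ≤ C) (n : ℕ)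
    (t p : ℝ) :
    ∫⁻ q, ‖dysonKernel v n t p q‖ₑ ≤ ENNReal.ofReal ((C / Real.sqrt (2 * Real.pi)) ^ (n + 1)) *
      (ENNReal.ofReal (2 * Real.pi) * ENNReal.ofReal (2 + |t|)) ^ (n + 1) := by
  have hpoint (q : ℝ) : ‖dysonKernel v n t p q‖ₑ ≤
      ENNReal.ofReal ((C / Real.sqrt (2 * Real.pi)) ^ (n + 1)) *
        ∫⁻ z : Fin n → ℝ, ‖simplexPhase (momentumPath p z q ^ 2) t‖ₑ := by
    rw [dysonKernel_eq_integral hv hC, enorm_mul, Complex.enorm_exp_I_mul_ofReal, one_mul,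
      ← lintegral_const_mul' _ _ ENNReal.ofReal_ne_top]
    refine (enorm_integral_le_lintegral_enorm _).trans (lintegral_mono fun z ↦ ?_)
    rw [enorm_mul, ← ofReal_norm (pathWeight _ _)]
    gcongr
    exact norm_pathWeight_le hC _
  have hcont : Continuous fun z ↦ simplexPhase (Fin.cons p z ^ 2 : Fin (n + 2) → ℝ) t := by
    fun_prop
  have hrow := (lintegral_enorm_simplexPhase_le |t| (n + 1) t le_rfl).1 p
  rw [lintegral_pi_insertNth (Fin.last n) hcont.enorm.measurable] at hrow
  simp only [Fin.insertNth_last'] at hrow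
  refine (lintegral_mono hpoint).trans ?_
  rw [lintegral_const_mul' _ _ ENNReal.ofReal_ne_top]
  gcongr
  exact hrow

end Dyson

theorem dysonKernel_row_L1_finite_general {v : ℝ → ℂ} (hv : Measurable v)
    (hvb : ∃ C : ℝ, ∀ p : ℝ, ‖v p‖ ≤ C) (n : ℕ) (t : ℝ) :
    (⨆ p : ℝ, ∫⁻ q : ℝ, (‖dysonKernel v n t p q‖₊ : ENNReal)) < ⊤ := by
  obtain ⟨C, hC⟩ := hvb
  exact (iSup_le (lintegral_enorm_dysonKernel_le hv hC n t)).trans_lt (by finiteness)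

/-- For a bounded measurable `v` with `conj (v p) = v (−p)`, the row `L¹`-norms of every
Dyson kernel `K_{t,n}[v]` (here `n ≥ 1` corresponds to `dysonKernel v (n-1)`) are
uniformly bounded in `p`. -/
theorem dysonKernel_row_L1_finite (v : ℝ → ℂ) (hv : Measurable v)
    (hvb : ∃ C : ℝ, ∀ p : ℝ, ‖v p‖ ≤ C)
    (hvs : ∀ p : ℝ, (starRingEnd ℂ) (v p) = v (-p)) :
    ∀ n : ℕ, ∀ t : ℝ, 0 < t →
      (⨆ p : ℝ, ∫⁻ q : ℝ, (‖dysonKernel v n t p q‖₊ : ENNReal)) < ⊤ :=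
  fun n t _ ↦ dysonKernel_row_L1_finite_general hv hvb n t
end

section
/- Let α ∈ ℝ \ {0}, x₀ ∈ ℝ, and let W : ℝ → ℝ be continuous, compactly supported, nonnegative, with ∫_ℝ W(x) dx = 1. Set v_α(p) = α (2π)^{-1/2} e^{−ipx₀} and v_ε(p) = α · (2π)^{-1/2} ∫_ℝ ε⁻¹ W((x − x₀)/ε) e^{−ipx} dx for ε > 0. With K_{t,n}[·] the recursively defined Dyson kernels, for every n ≥ 1, every t ∈ ℝ and every p ∈ ℝ, the integrals ∫_ℝ |K_{t,n}[v_α](p,q) − K_{t,n}[v_ε](p,q)| dq converge to 0 as ε → 0⁺. -/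
open MeasureTheory Filter Topology

/-- The Fourier transform of the delta potential `α δ(· − x₀)`. -/
noncomputable def deltaFT (α x₀ p : ℝ) : ℂ :=
  (α : ℂ) * ((Real.sqrt (2 * Real.pi) : ℝ) : ℂ)⁻¹ * Complex.exp (-Complex.I * p * x₀)

/-- `α` times the Fourier transform of the shifted mollifier `x ↦ W_ε(x − x₀)`. -/
noncomputable def mollPotFT (α : ℝ) (W : ℝ → ℝ) (x₀ ε p : ℝ) : ℂ :=
  (α : ℂ) * (((Real.sqrt (2 * Real.pi) : ℝ) : ℂ)⁻¹ *
    ∫ x : ℝ, ((ε⁻¹ * W ((x - x₀) / ε) : ℝ) : ℂ) * Complex.exp (-Complex.I * p * x))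

/-!
Taking absolute values inside the time integrals of a Dyson kernel loses the decay in `q`. It is
visible after a Laplace transform in time on the line `Re = 1`: the time-ordered integrals turn into
a product of free resolvents `r x q = 1 / (1 + i (x - q²))`, one for each momentum. Since
`∫ |r x z| dz` is bounded uniformly in `x`, a uniform bound on the potentials dominates all the
transformed kernels by a multiple of `|r x p * r x q|`, which is integrable jointly in `(x, q)`.
Pointwise convergence of the potentials therefore gives convergence of the transformed kernels in
`L¹(dx dq)`, and inverting the Laplace transform carries it back to `L¹(dq)` for each `t ≥ 0`.
Complex conjugation exchanges `t` and `-t`. Finally, the mollified potential is the delta potential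
times the Fourier transform of `W` at scale `ε`, which is bounded and tends to `∫ W = 1`.
-/

section

open Complex Set
open scoped Real FourierTransform ComplexConjugate

/-- The symbol `1 / (1 + i(x - q²))` of the free resolvent, i.e. the Laplace transform of the free
evolution `t ↦ e^{itq²}` at the point `1 + ix`. -/
noncomputable def freeResolvent (x q : ℝ) : ℂ := (1 + I * ((x - q ^ 2 : ℝ) : ℂ))⁻¹

lemma one_add_I_mul_ofReal_ne_zero (u : ℝ) : 1 + I * (u : ℂ) ≠ 0 := fun h ↦ by
  simpa using congrArg re h

@[fun_prop]
lemma continuous_freeResolvent : Continuous fun y : ℝ × ℝ ↦ freeResolvent y.1 y.2 :=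
  Continuous.inv₀ (by fun_prop) fun _ ↦ one_add_I_mul_ofReal_ne_zero _

lemma freeResolvent_sub_freeResolvent (x p q : ℝ) :
    freeResolvent x p - freeResolvent x q =
      I * ((p : ℂ) ^ 2 - (q : ℂ) ^ 2) * (freeResolvent x p * freeResolvent x q) := by
  have hp := one_add_I_mul_ofReal_ne_zero (x - p ^ 2)
  have hq := one_add_I_mul_ofReal_ne_zero (x - q ^ 2)
  rw [freeResolvent, freeResolvent, inv_sub_inv hp hq, ← mul_inv, div_eq_mul_inv]
  push_cast
  ring

lemma norm_freeResolvent_le (x q : ℝ) : ‖freeResolvent x q‖ ≤ 2 * (1 + |x - q ^ 2|)⁻¹ := by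
  have hre := abs_re_le_norm (1 + I * ((x - q ^ 2 : ℝ) : ℂ))
  have him := abs_im_le_norm (1 + I * ((x - q ^ 2 : ℝ) : ℂ))
  simp only [add_re, one_re, re_ofReal_mul, I_re, add_im, one_im, mul_comm I, im_ofReal_mul, I_im,
    mul_zero, add_zero, mul_one, zero_add, abs_one] at hre him
  rw [freeResolvent, norm_inv, ← div_eq_mul_inv, ← inv_div, mul_comm I]
  gcongr
  linarith

lemma abs_sub_sqrt_sq_le (x q : ℝ) : (|q| - √x) ^ 2 ≤ |x - q ^ 2| := by
  rcases le_total 0 x with hx | hx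
  · calc (|q| - √x) ^ 2 = |(|q| - √x)| * |(|q| - √x)| := by rw [abs_mul_abs_self, sq]
      _ ≤ |(|q| - √x)| * (|q| + √x) := by
          gcongr
          exact abs_le.2 ⟨by linarith [abs_nonneg q], by linarith [Real.sqrt_nonneg x]⟩
      _ = |(|q| - √x) * (|q| + √x)| := by
          rw [abs_mul, abs_of_nonneg (a := |q| + √x) (by positivity)]
      _ = |√x ^ 2 - |q| ^ 2| := by rw [abs_sub_comm, sq_sub_sq, mul_comm]
      _ = |x - q ^ 2| := by rw [Real.sq_sqrt hx, sq_abs]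
  · rw [Real.sqrt_eq_zero_of_nonpos hx, sub_zero, sq_abs, abs_sub_comm]
    exact (le_sub_self_iff _).2 hx |>.trans (le_abs_self _)

lemma inv_one_add_abs_sub_sq_le (x q : ℝ) :
    (1 + |x - q ^ 2|)⁻¹ ≤ (1 + (q - √x) ^ 2)⁻¹ + (1 + (q + √x) ^ 2)⁻¹ := by
  have h : (1 + |x - q ^ 2|)⁻¹ ≤ (1 + (|q| - √x) ^ 2)⁻¹ := by
    gcongr
    exact abs_sub_sqrt_sq_le x q
  rcases abs_choice q with hq | hq <;> rw [hq] at h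
  · exact h.trans (le_add_of_nonneg_right (by positivity))
  · rw [← neg_add', neg_sq] at h
    exact h.trans (le_add_of_nonneg_left (by positivity))

lemma integrable_lorentzian_pair (y : ℝ) :
    Integrable fun q : ℝ ↦ (1 + (q - y) ^ 2)⁻¹ + (1 + (q + y) ^ 2)⁻¹ :=
  (integrable_inv_one_add_sq.comp_sub_right y).add (integrable_inv_one_add_sq.comp_add_right y)

lemma norm_freeResolvent_le_lorentzian_pair (x q : ℝ) :
    ‖freeResolvent x q‖ ≤ 2 * ((1 + (q - √x) ^ 2)⁻¹ + (1 + (q + √x) ^ 2)⁻¹) :=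
  (norm_freeResolvent_le x q).trans (by gcongr; exact inv_one_add_abs_sub_sq_le x q)

lemma integrable_freeResolvent_right (x : ℝ) : Integrable fun q ↦ freeResolvent x q :=
  ((integrable_lorentzian_pair (√x)).const_mul 2).mono'
    (by fun_prop : Continuous fun q ↦ freeResolvent x q).aestronglyMeasurable
    (.of_forall (norm_freeResolvent_le_lorentzian_pair x))

lemma integral_norm_freeResolvent_le (x : ℝ) : ∫ q, ‖freeResolvent x q‖ ≤ 4 * π :=
  calc ∫ q, ‖freeResolvent x q‖
      ≤ ∫ q, 2 * ((1 + (q - √x) ^ 2)⁻¹ + (1 + (q + √x) ^ 2)⁻¹) :=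
        integral_mono (integrable_freeResolvent_right x).norm
          ((integrable_lorentzian_pair (√x)).const_mul 2)
          (norm_freeResolvent_le_lorentzian_pair x)
    _ = 4 * π := by
        rw [integral_const_mul, integral_add (integrable_inv_one_add_sq.comp_sub_right (√x))
            (integrable_inv_one_add_sq.comp_add_right (√x)),
          integral_sub_right_eq_self (fun q : ℝ ↦ (1 + q ^ 2)⁻¹),
          integral_add_right_eq_self (fun q : ℝ ↦ (1 + q ^ 2)⁻¹), integral_univ_inv_one_add_sq]
        ring

-- The smaller of `a⁻¹`, `b⁻¹` is at most `2 / d`; spend its power `θ` on `d` and the rest on the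
-- larger one.
lemma inv_mul_inv_le_rpow {a b d θ : ℝ} (ha : 0 < a) (hb : 0 < b) (hd : 0 < d) (hab : d ≤ a + b)
    (hθ₀ : 0 ≤ θ) (hθ₁ : θ ≤ 1) :
    a⁻¹ * b⁻¹ ≤ (d / 2) ^ (-θ) * (a ^ (θ - 2) + b ^ (θ - 2)) := by
  wlog h : a ≤ b generalizing a b
  · rw [mul_comm, add_comm (a ^ _)]
    exact this hb ha (by rwa [add_comm]) (le_of_not_ge h)
  have hb_le : b⁻¹ ≤ (d / 2) ^ (-θ) * a ^ (θ - 1) :=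
    calc b⁻¹ = b ^ (-θ) * b ^ (θ - 1) := by
          rw [← Real.rpow_add hb, ← Real.rpow_neg_one]
          ring_nf
      _ ≤ (d / 2) ^ (-θ) * a ^ (θ - 1) :=
          mul_le_mul (Real.rpow_le_rpow_of_nonpos (by positivity) (by linarith) (by linarith))
            (Real.rpow_le_rpow_of_nonpos ha h (by linarith)) (by positivity) (by positivity)
  calc a⁻¹ * b⁻¹ ≤ a⁻¹ * ((d / 2) ^ (-θ) * a ^ (θ - 1)) := by gcongr
    _ = (d / 2) ^ (-θ) * a ^ (θ - 2) := by
        rw [mul_left_comm, ← Real.rpow_neg_one, ← Real.rpow_add ha]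
        ring_nf
    _ ≤ (d / 2) ^ (-θ) * (a ^ (θ - 2) + b ^ (θ - 2)) := by
        gcongr
        exact le_add_of_nonneg_right (by positivity)

lemma norm_freeResolvent_mul_le (x p q : ℝ) :
    ‖freeResolvent x p * freeResolvent x q‖ ≤
      4 * (((1 + |p ^ 2 - q ^ 2|) / 2) ^ (-(3 / 4) : ℝ) *
        ((1 + |x - p ^ 2|) ^ (-(5 / 4) : ℝ) + (1 + |x - q ^ 2|) ^ (-(5 / 4) : ℝ))) := by
  have htriangle : 1 + |p ^ 2 - q ^ 2| ≤ (1 + |x - p ^ 2|) + (1 + |x - q ^ 2|) := by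
    have := abs_sub_le (p ^ 2) x (q ^ 2)
    rw [abs_sub_comm (p ^ 2) x] at this
    linarith
  have hrpow := inv_mul_inv_le_rpow (θ := 3 / 4) (by positivity) (by positivity) (by positivity)
    htriangle (by norm_num) (by norm_num)
  norm_num only at hrpow
  calc ‖freeResolvent x p * freeResolvent x q‖
      ≤ (2 * (1 + |x - p ^ 2|)⁻¹) * (2 * (1 + |x - q ^ 2|)⁻¹) :=
        norm_mul_le_of_le (norm_freeResolvent_le x p) (norm_freeResolvent_le x q)
    _ = 4 * ((1 + |x - p ^ 2|)⁻¹ * (1 + |x - q ^ 2|)⁻¹) := by ring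
    _ ≤ _ := by
        norm_num only
        gcongr

lemma integrable_one_add_abs_rpow {r : ℝ} (hr : 1 < r) :
    Integrable fun u : ℝ ↦ (1 + |u|) ^ (-r) :=
  integrable_one_add_norm (by simpa using hr)

lemma one_add_abs_sq_le (p q : ℝ) : (1 + |q|) ^ 2 ≤ 2 * (1 + p ^ 2) * (1 + |p ^ 2 - q ^ 2|) := by
  have := neg_abs_le (p ^ 2 - q ^ 2)
  nlinarith [sq_nonneg (1 - |q|), sq_abs q, mul_nonneg (sq_nonneg p) (abs_nonneg (p ^ 2 - q ^ 2))]

lemma integrable_one_add_abs_sq_sub_sq_rpow (p : ℝ) {θ : ℝ} (hθ : 1 / 2 < θ) :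
    Integrable fun q : ℝ ↦ ((1 + |p ^ 2 - q ^ 2|) / 2) ^ (-θ) := by
  refine ((integrable_one_add_abs_rpow (r := 2 * θ) (by linarith)).const_mul
    ((4 * (1 + p ^ 2)) ^ θ)).mono' ?_ (.of_forall fun q ↦ ?_)
  · exact (Continuous.rpow_const (by fun_prop) fun q ↦ .inl (by positivity)).aestronglyMeasurable
  · rw [Real.norm_of_nonneg (by positivity)]
    calc ((1 + |p ^ 2 - q ^ 2|) / 2) ^ (-θ)
        ≤ ((1 + |q|) ^ 2 / (4 * (1 + p ^ 2))) ^ (-θ) := by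
          refine Real.rpow_le_rpow_of_nonpos (by positivity) ?_ (by linarith)
          rw [div_le_iff₀ (by positivity)]
          linarith [one_add_abs_sq_le p q]
      _ = (4 * (1 + p ^ 2)) ^ θ * (1 + |q|) ^ (-(2 * θ)) := by
          rw [Real.div_rpow (by positivity) (by positivity),
            Real.rpow_neg (x := 4 * (1 + p ^ 2)) (by positivity), div_inv_eq_mul, mul_comm,
            ← Real.rpow_natCast_mul (by positivity)]
          push_cast
          ring_nf

lemma integrable_comp_sub_mul {f g : ℝ → ℝ} (hf : Integrable f) (hg : Integrable g)
    {φ : ℝ → ℝ} (hφ : Measurable φ) :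
    Integrable fun y : ℝ × ℝ ↦ g y.2 * f (y.1 - φ y.2) := by
  have hshear : MeasurePreserving (fun y : ℝ × ℝ ↦ (y.1, y.2 - φ y.1)) :=
    (MeasurePreserving.id volume).skew_product (g := fun q x ↦ x - φ q) (by fun_prop)
      (.of_forall fun q ↦ (measurePreserving_sub_right volume (φ q)).map_eq)
  exact (hshear.integrable_comp_of_integrable (hg.mul_prod hf)).swap

lemma integrable_freeResolvent_mul_left (p q : ℝ) :
    Integrable fun x ↦ freeResolvent x p * freeResolvent x q := by
  have hdecay := integrable_one_add_abs_rpow (r := 5 / 4) (by norm_num)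
  exact ((((hdecay.comp_sub_right (p ^ 2)).add (hdecay.comp_sub_right (q ^ 2))).const_mul
    _).const_mul 4).mono' (by fun_prop : Continuous _).aestronglyMeasurable
    (.of_forall fun x ↦ norm_freeResolvent_mul_le x p q)

lemma integrable_freeResolvent_mul (p : ℝ) :
    Integrable fun y : ℝ × ℝ ↦ freeResolvent y.1 p * freeResolvent y.1 y.2 := by
  have hx := integrable_one_add_abs_rpow (r := 5 / 4) (by norm_num)
  have hq := integrable_one_add_abs_sq_sub_sq_rpow p (θ := 3 / 4) (by norm_num)
  refine (((integrable_comp_sub_mul hx hq (measurable_const (a := p ^ 2))).add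
    (integrable_comp_sub_mul hx hq (φ := (· ^ 2)) (by fun_prop))).const_mul 4).mono'
    (by fun_prop : Continuous _).aestronglyMeasurable (.of_forall fun y ↦ ?_)
  simpa only [Pi.add_apply, mul_add] using norm_freeResolvent_mul_le y.1 p y.2

/-- The Bromwich integral along the line `Re = 1`, inverting the Laplace transform: `g x` stands for
the transform evaluated at `1 + ix`. -/
noncomputable def bromwich (g : ℝ → ℂ) (t : ℝ) : ℂ :=
  (2 * π : ℂ)⁻¹ * ∫ x : ℝ, exp ((1 + I * x) * t) * g x

lemma norm_exp_one_add_I_mul_mul (x t : ℝ) : ‖exp ((1 + I * x) * t)‖ = Real.exp t := by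
  simp [norm_exp]

lemma norm_exp_I_mul_mul_sq (t q : ℝ) : ‖exp (I * t * (q : ℂ) ^ 2)‖ = 1 := by
  simp [norm_exp, ← ofReal_pow]

lemma integrable_exp_one_add_I_mul_mul {X : Type*} [MeasurableSpace X] {μ : Measure X} {f : X → ℝ}
    {g : X → ℂ} (hf : AEMeasurable f μ) (hg : Integrable g μ) (t : ℝ) :
    Integrable (fun y ↦ exp ((1 + I * f y) * t) * g y) μ :=
  hg.bdd_mul (c := Real.exp t) (by fun_prop : AEMeasurable _ μ).aestronglyMeasurable
    (.of_forall fun y ↦ (norm_exp_one_add_I_mul_mul (f y) t).le)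

lemma bromwich_sub {g h : ℝ → ℂ} (hg : Integrable g) (hh : Integrable h) (t : ℝ) :
    bromwich (fun x ↦ g x - h x) t = bromwich g t - bromwich h t := by
  have hexp {k : ℝ → ℂ} (hk : Integrable k) : Integrable fun x : ℝ ↦ exp ((1 + I * x) * t) * k x :=
    integrable_exp_one_add_I_mul_mul measurable_id'.aemeasurable hk t
  simp only [bromwich, mul_sub, integral_sub (hexp hg) (hexp hh)]

lemma bromwich_mul_const (g : ℝ → ℂ) (c : ℂ) (t : ℝ) :
    bromwich (fun x ↦ g x * c) t = bromwich g t * c := by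
  simp only [bromwich, ← mul_assoc, integral_mul_const]

lemma enorm_bromwich_le (g : ℝ → ℂ) (t : ℝ) :
    ‖bromwich g t‖ₑ ≤ ENNReal.ofReal (Real.exp t) * ∫⁻ x, ‖g x‖ₑ := by
  have hconst : ‖(2 * π : ℂ)⁻¹‖ₑ ≤ 1 := by
    rw [← ofReal_norm, ENNReal.ofReal_le_one, norm_inv, norm_mul, norm_real,
      Real.norm_of_nonneg Real.pi_pos.le, Complex.norm_ofNat]
    exact inv_le_one_of_one_le₀ (by linarith [Real.pi_gt_three])
  calc ‖bromwich g t‖ₑ ≤ 1 * ∫⁻ x : ℝ, ‖exp ((1 + I * x) * t) * g x‖ₑ := by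
        rw [bromwich, enorm_mul]
        gcongr
        exact enorm_integral_le_lintegral_enorm _
    _ = ENNReal.ofReal (Real.exp t) * ∫⁻ x, ‖g x‖ₑ := by
        simp only [one_mul, enorm_mul, ← ofReal_norm (exp _), norm_exp_one_add_I_mul_mul]
        rw [lintegral_const_mul' _ _ ENNReal.ofReal_ne_top]

lemma bromwich_integral {m : ℝ → ℝ → ℂ} (hm : Integrable m.uncurry) (t : ℝ) :
    bromwich (fun x ↦ ∫ z, m x z) t = ∫ z, bromwich (m · z) t := by
  simp only [bromwich, ← integral_const_mul]
  exact integral_integral_swap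
    ((integrable_exp_one_add_I_mul_mul measurable_fst.aemeasurable hm t).const_mul _)

lemma exp_mul_freeResolvent (x q t : ℝ) :
    exp ((1 + I * x) * t) * freeResolvent x q =
      exp (I * t * (q : ℂ) ^ 2) *
        ∫ s : ℝ in Iic t, exp (-(I * s * (q : ℂ) ^ 2)) * exp ((1 + I * x) * s) := by
  have hre : 0 < (1 + I * ((x - q ^ 2 : ℝ) : ℂ)).re := by simp [-ofReal_sub]
  have hexp (s : ℝ) : exp (-(I * s * (q : ℂ) ^ 2)) * exp ((1 + I * x) * s) =
      exp ((1 + I * ((x - q ^ 2 : ℝ) : ℂ)) * s) := by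
    rw [← exp_add]
    push_cast
    ring_nf
  simp only [hexp]
  rw [integral_exp_mul_complex_Iic hre, ← hexp, freeResolvent, div_eq_mul_inv, ← mul_assoc,
    ← mul_assoc, ← exp_add, add_neg_cancel, exp_zero, one_mul]

lemma bromwich_freeResolvent_mul {g : ℝ → ℂ} (hg : Integrable g) (q t : ℝ) :
    bromwich (fun x ↦ freeResolvent x q * g x) t =
      exp (I * t * (q : ℂ) ^ 2) *
        ∫ s in Iic t, exp (-(I * s * (q : ℂ) ^ 2)) * bromwich g s := by
  have hintegrable : Integrable (Function.uncurry fun x s : ℝ ↦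
      exp (-(I * s * (q : ℂ) ^ 2)) * (exp ((1 + I * x) * s) * g x))
      (volume.prod (volume.restrict (Iic t))) := by
    refine (hg.norm.mul_prod (integrableOn_exp_Iic t)).mono' ?_ (.of_forall fun y ↦ ?_)
    · exact (by fun_prop : Continuous fun y : ℝ × ℝ ↦
        exp (-(I * y.2 * (q : ℂ) ^ 2))).aestronglyMeasurable.mul
        ((by fun_prop : Continuous fun y : ℝ × ℝ ↦
          exp ((1 + I * y.1) * y.2)).aestronglyMeasurable.mul hg.aestronglyMeasurable.comp_fst)
    · simp only [Function.uncurry, norm_mul, exp_neg, norm_inv, norm_exp_I_mul_mul_sq,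
        norm_exp_one_add_I_mul_mul, inv_one, one_mul]
      rw [mul_comm]
  have hinner (x : ℝ) : exp ((1 + I * x) * t) * (freeResolvent x q * g x) =
      exp (I * t * (q : ℂ) ^ 2) *
        ∫ s : ℝ in Iic t, exp (-(I * s * (q : ℂ) ^ 2)) * (exp ((1 + I * x) * s) * g x) := by
    simp only [← mul_assoc, integral_mul_const, exp_mul_freeResolvent]
  simp only [bromwich, hinner, integral_const_mul]
  rw [integral_integral_swap hintegrable]
  simp only [integral_const_mul, mul_left_comm _ (2 * π : ℂ)⁻¹]

lemma bromwich_eq_exp_mul_fourierInv (g : ℝ → ℂ) (t : ℝ) :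
    bromwich g t = exp t * 𝓕⁻ (fun ξ ↦ g (2 * π * ξ)) t := by
  have hsplit (x : ℝ) : exp ((1 + I * x) * t) * g x = exp t * (exp (x * t * I) * g x) := by
    rw [← mul_assoc, ← exp_add]
    ring_nf
  have hscale : ∫ ξ : ℝ, exp ((2 * π * ξ : ℝ) * t * I) * g (2 * π * ξ) =
      (2 * π : ℂ)⁻¹ * ∫ x : ℝ, exp (x * t * I) * g x := by
    rw [Measure.integral_comp_mul_left (fun x : ℝ ↦ exp (x * t * I) * g x),
      abs_of_pos (by positivity), real_smul]
    push_cast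
    rfl
  rw [bromwich, Real.fourierInv_eq']
  simp only [hsplit, integral_const_mul, smul_eq_mul, RCLike.inner_apply, conj_trivial]
  rw [mul_left_comm, ← hscale]
  congr 2 with ξ
  push_cast
  ring_nf

lemma fourier_indicator_Ici_exp_neg_mul (f : ℝ → ℂ) (ξ : ℝ) :
    𝓕 ((Ici 0).indicator fun s : ℝ ↦ exp (-s) * f s) ξ =
      ∫ s : ℝ in Ioi 0, exp (-((1 + I * (2 * π * ξ : ℝ)) * s)) * f s := by
  rw [Real.fourier_real_eq_integral_exp_smul, ← integral_Ici_eq_integral_Ioi,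
    ← integral_indicator measurableSet_Ici]
  congr 1 with s
  simp only [smul_eq_mul, indicator_apply, mul_ite, mul_zero, ← mul_assoc, ← exp_add]
  push_cast
  ring_nf

lemma bromwich_laplace {f : ℝ → ℂ} (hf : ContinuousOn f (Ici 0)) (hf₀ : f 0 = 0)
    (hfi : IntegrableOn (fun s : ℝ ↦ exp (-s) * f s) (Ioi 0))
    (hLi : Integrable fun x : ℝ ↦ ∫ s : ℝ in Ioi 0, exp (-((1 + I * x) * s)) * f s) :
    bromwich (fun x ↦ ∫ s : ℝ in Ioi 0, exp (-((1 + I * x) * s)) * f s) = (Ici 0).indicator f := by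
  set h : ℝ → ℂ := (Ici 0).indicator fun s ↦ exp (-s) * f s with h_def
  have hh : Continuous h := by
    refine continuous_indicator (by simp [hf₀]) ?_
    rw [isClosed_Ici.closure_eq]
    exact (by fun_prop : Continuous fun s : ℝ ↦ exp (-s)).continuousOn.mul hf
  have hhi : Integrable h := (integrable_indicator_iff measurableSet_Ici).2
    ((integrableOn_Ici_iff_integrableOn_Ioi (by simp)).2 hfi)
  have hfourier := funext (fourier_indicator_Ici_exp_neg_mul f)
  have hinv := hh.fourierInv_fourier_eq hhi
    (hfourier ▸ hLi.comp_mul_left' (R := 2 * π) (by positivity))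
  ext t
  rw [bromwich_eq_exp_mul_fourierInv, ← hfourier, hinv, h_def]
  simp only [indicator_apply, mul_ite, mul_zero, ← mul_assoc, ← exp_add, add_neg_cancel, exp_zero,
    one_mul]

lemma exp_neg_mul_exp_sq (x q s : ℝ) :
    exp (-((1 + I * x) * s)) * exp (I * s * (q : ℂ) ^ 2) =
      exp (-(1 + I * ((x - q ^ 2 : ℝ) : ℂ)) * s) := by
  rw [← exp_add]
  push_cast
  ring_nf

lemma neg_one_add_I_mul_ofReal_re_neg (u : ℝ) : (-(1 + I * (u : ℂ))).re < 0 := by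
  simp

lemma integrableOn_exp_neg_mul_exp_sq (x q : ℝ) : IntegrableOn
    (fun s : ℝ ↦ exp (-((1 + I * x) * s)) * exp (I * s * (q : ℂ) ^ 2)) (Ioi 0) := by
  simp only [exp_neg_mul_exp_sq]
  exact integrableOn_exp_mul_complex_Ioi (neg_one_add_I_mul_ofReal_re_neg _) 0

lemma integral_exp_neg_mul_exp_sq (x q : ℝ) :
    ∫ s : ℝ in Ioi 0, exp (-((1 + I * x) * s)) * exp (I * s * (q : ℂ) ^ 2) = freeResolvent x q := by
  simp only [exp_neg_mul_exp_sq]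
  rw [integral_exp_mul_complex_Ioi (neg_one_add_I_mul_ofReal_re_neg _), ofReal_zero, mul_zero,
    exp_zero, neg_div_neg_eq, one_div, freeResolvent]

lemma bromwich_freeResolvent_mul_freeResolvent {p q : ℝ} (hpq : p ^ 2 ≠ q ^ 2) :
    bromwich (fun x ↦ freeResolvent x p * freeResolvent x q) =
      (Ici 0).indicator fun t : ℝ ↦ exp (I * t * (q : ℂ) ^ 2) * phiK t p q := by
  set d : ℂ := I * ((p : ℂ) ^ 2 - (q : ℂ) ^ 2) with d_def
  have hd : d ≠ 0 := mul_ne_zero I_ne_zero (sub_ne_zero.2 (mod_cast hpq))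
  set f : ℝ → ℂ := fun t : ℝ ↦
    (exp (I * t * (p : ℂ) ^ 2) - exp (I * t * (q : ℂ) ^ 2)) / d with f_def
  have hphi (t : ℝ) : exp (I * t * (q : ℂ) ^ 2) * phiK t p q = f t := by
    rw [phiK, if_neg hpq, ← d_def, mul_div_assoc', mul_sub_one, ← exp_add, f_def]
    ring_nf
  have hintegrable := integrableOn_exp_neg_mul_exp_sq
  have hlaplace (x : ℝ) : ∫ s : ℝ in Ioi 0, exp (-((1 + I * x) * s)) * f s =
      freeResolvent x p * freeResolvent x q := by
    simp only [f_def, mul_div_assoc', mul_sub]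
    rw [integral_div, integral_sub (hintegrable x p) (hintegrable x q), integral_exp_neg_mul_exp_sq,
      integral_exp_neg_mul_exp_sq, freeResolvent_sub_freeResolvent, mul_div_cancel_left₀ _ hd]
  simp only [hphi, ← hlaplace]
  refine bromwich_laplace (by fun_prop) (by simp [f_def]) ?_ ?_
  · simpa [IntegrableOn, f_def, mul_div_assoc', mul_sub] using
      ((hintegrable 0 p).sub (hintegrable 0 q)).div_const d
  · simpa only [hlaplace] using integrable_freeResolvent_mul_left p q

lemma setIntegral_Iic_indicator_Ici {E : Type*} [NormedAddCommGroup E] [NormedSpace ℝ E]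
    (f : ℝ → E) (t : ℝ) :
    ∫ s in Iic t, (Ici 0).indicator f s = (Ici 0).indicator (fun t ↦ ∫ s in (0 : ℝ)..t, f s) t := by
  rw [setIntegral_indicator measurableSet_Ici, inter_comm, Ici_inter_Iic, indicator_apply]
  split_ifs with ht
  · rw [intervalIntegral.integral_of_le ht, integral_Icc_eq_integral_Ioc]
  · rw [Icc_eq_empty ht, setIntegral_empty]

lemma one_le_sqrt_two_pi : 1 ≤ √(2 * π) := Real.one_le_sqrt.2 (by linarith [Real.pi_gt_three])

/-- Boundedness and measurability, the standing assumptions on the Fourier transform of a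
potential, with an explicit bound so that families of potentials can be bounded uniformly. -/
structure IsBoundedPotential (v : ℝ → ℂ) (C : ℝ) : Prop where
  measurable : Measurable v
  norm_le (y : ℝ) : ‖v y‖ ≤ C

namespace IsBoundedPotential

variable {v : ℝ → ℂ} {C : ℝ}

lemma nonneg (hv : IsBoundedPotential v C) : 0 ≤ C := (norm_nonneg _).trans (hv.norm_le 0)

lemma mono {D : ℝ} (hv : IsBoundedPotential v C) (hCD : C ≤ D) : IsBoundedPotential v D :=
  ⟨hv.measurable, fun y ↦ (hv.norm_le y).trans hCD⟩

lemma star (hv : IsBoundedPotential v C) : IsBoundedPotential (fun y ↦ conj (v y)) C where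
  measurable := continuous_conj.measurable.comp hv.measurable
  norm_le y := (RCLike.norm_conj _).trans_le (hv.norm_le y)

lemma div_sqrt_two_pi (hv : IsBoundedPotential v C) :
    IsBoundedPotential (fun y ↦ v y / ((√(2 * π) : ℝ) : ℂ)) C where
  measurable := hv.measurable.div_const _
  norm_le y := by
    rw [norm_div, norm_real, Real.norm_of_nonneg (Real.sqrt_nonneg _)]
    exact (div_le_self (norm_nonneg _) one_le_sqrt_two_pi).trans (hv.norm_le y)

end IsBoundedPotential

/-- The Laplace transform, at `1 + ix`, of `t ↦ e^{itq²} K_{t,n+1}[v](p,q)` as a multiple integral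
over intermediate momenta: each integration over an intermediate time has become a factor
`freeResolvent`. -/
noncomputable def resolventKernel (v : ℝ → ℂ) (p : ℝ) : ℕ → ℝ → ℝ → ℂ
  | 0 => fun x q ↦ freeResolvent x p * freeResolvent x q * (v (p - q) / ((√(2 * π) : ℝ) : ℂ))
  | n + 1 => fun x q ↦
      freeResolvent x q * ∫ z : ℝ, resolventKernel v p n x z * (v (z - q) / ((√(2 * π) : ℝ) : ℂ))

section resolventKernel

variable {v : ℝ → ℂ} {C : ℝ}

lemma IsBoundedPotential.stronglyMeasurable_resolventKernel (hv : IsBoundedPotential v C) (p : ℝ)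
    (n : ℕ) : StronglyMeasurable (resolventKernel v p n).uncurry := by
  have hv' := hv.div_sqrt_two_pi.measurable
  induction n with
  | zero =>
    exact (by fun_prop : Continuous fun y : ℝ × ℝ ↦
      freeResolvent y.1 p * freeResolvent y.1 y.2).stronglyMeasurable.mul
      (hv'.comp (by fun_prop : Measurable fun y : ℝ × ℝ ↦ p - y.2)).stronglyMeasurable
  | succ n ih =>
    have hintegrand : StronglyMeasurable fun w : (ℝ × ℝ) × ℝ ↦
        resolventKernel v p n w.1.1 w.2 * (v (w.2 - w.1.2) / ((√(2 * π) : ℝ) : ℂ)) :=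
      (ih.comp_measurable (g := fun w : (ℝ × ℝ) × ℝ ↦ (w.1.1, w.2)) (by fun_prop)).mul
        (hv'.comp (by fun_prop : Measurable fun w : (ℝ × ℝ) × ℝ ↦ w.2 - w.1.2)).stronglyMeasurable
    exact continuous_freeResolvent.stronglyMeasurable.mul hintegrand.integral_prod_right'

lemma IsBoundedPotential.norm_resolventKernel_mul_le_of_le (hv : IsBoundedPotential v C) {p x z : ℝ}
    {n : ℕ} {B : ℝ} (h : ‖resolventKernel v p n x z‖ ≤ B * ‖freeResolvent x z‖) (y : ℝ) :
    ‖resolventKernel v p n x z * (v y / ((√(2 * π) : ℝ) : ℂ))‖ ≤ B * C * ‖freeResolvent x z‖ :=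
  (norm_mul_le_of_le h (hv.div_sqrt_two_pi.norm_le y)).trans_eq (by ring)

lemma IsBoundedPotential.norm_resolventKernel_le (hv : IsBoundedPotential v C) (p : ℝ) (n : ℕ)
    (x q : ℝ) :
    ‖resolventKernel v p n x q‖ ≤
      C * (C * (4 * π)) ^ n * ‖freeResolvent x p‖ * ‖freeResolvent x q‖ := by
  induction n generalizing q with
  | zero =>
    simp only [resolventKernel, pow_zero, mul_one]
    rw [mul_comm, mul_assoc, ← norm_mul]
    exact norm_mul_le_of_le (hv.div_sqrt_two_pi.norm_le _) le_rfl
  | succ n ih =>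
    have hC := hv.nonneg
    set B := C * (C * (4 * π)) ^ n * ‖freeResolvent x p‖
    have hintegral : ‖∫ z : ℝ, resolventKernel v p n x z * (v (z - q) / ((√(2 * π) : ℝ) : ℂ))‖ ≤
        B * C * (4 * π) :=
      calc _ ≤ ∫ z : ℝ, B * C * ‖freeResolvent x z‖ :=
            norm_integral_le_of_norm_le ((integrable_freeResolvent_right x).norm.const_mul _)
              (.of_forall fun z ↦ hv.norm_resolventKernel_mul_le_of_le (ih z) _)
        _ ≤ B * C * (4 * π) := by
            rw [integral_const_mul]
            gcongr
            exact integral_norm_freeResolvent_le x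
    calc ‖resolventKernel v p (n + 1) x q‖ ≤ ‖freeResolvent x q‖ * (B * C * (4 * π)) :=
          norm_mul_le_of_le le_rfl hintegral
      _ = _ := by ring

lemma IsBoundedPotential.integrable_resolventKernel (hv : IsBoundedPotential v C) (p : ℝ) (n : ℕ) :
    Integrable (resolventKernel v p n).uncurry :=
  ((integrable_freeResolvent_mul p).norm.const_mul (C * (C * (4 * π)) ^ n)).mono'
    (hv.stronglyMeasurable_resolventKernel p n).aestronglyMeasurable
    (.of_forall fun y ↦ (hv.norm_resolventKernel_le p n y.1 y.2).trans_eq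
      (by rw [norm_mul, mul_assoc]))

lemma bromwich_freeResolvent_mul_integral {m k : ℝ → ℝ → ℂ} {w : ℝ → ℂ} {q : ℝ}
    (hm : Integrable fun y : ℝ × ℝ ↦ m y.1 y.2 * w y.2)
    (hmk : ∀ᵐ z : ℝ, bromwich (m · z) =
      (Ici 0).indicator fun t : ℝ ↦ exp (I * t * (z : ℂ) ^ 2) * k t z) :
    bromwich (fun x ↦ freeResolvent x q * ∫ z, m x z * w z) =
      (Ici 0).indicator fun t : ℝ ↦ exp (I * t * (q : ℂ) ^ 2) *
        ∫ s in (0 : ℝ)..t, ∫ z, k s z * exp (I * s * ((z : ℂ) ^ 2 - (q : ℂ) ^ 2)) * w z := by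
  have hinner (s : ℝ) : exp (-(I * s * (q : ℂ) ^ 2)) * bromwich (fun x ↦ ∫ z, m x z * w z) s =
      (Ici 0).indicator
        (fun s : ℝ ↦ ∫ z, k s z * exp (I * s * ((z : ℂ) ^ 2 - (q : ℂ) ^ 2)) * w z) s := by
    have hsection : ∀ᵐ z : ℝ, bromwich (fun x ↦ m x z * w z) s =
        (Ici 0).indicator (fun s : ℝ ↦ exp (I * s * (z : ℂ) ^ 2) * k s z * w z) s := by
      filter_upwards [hmk] with z hz
      rw [bromwich_mul_const, hz, indicator_mul_const]
    rw [bromwich_integral (m := fun x z ↦ m x z * w z) hm, integral_congr_ae hsection]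
    by_cases hs : s ∈ Ici (0 : ℝ)
    · simp only [indicator_of_mem hs, ← integral_const_mul]
      congr 1 with z
      rw [mul_sub, sub_eq_add_neg, exp_add]
      ring
    · simp [indicator_of_notMem hs]
  ext t
  rw [bromwich_freeResolvent_mul hm.integral_prod_left]
  simp only [hinner]
  rw [setIntegral_Iic_indicator_Ici]
  exact (indicator_mul_right _ (fun t : ℝ ↦ exp (I * t * (q : ℂ) ^ 2)) _).symm

theorem IsBoundedPotential.bromwich_resolventKernel (hv : IsBoundedPotential v C) (p : ℝ) (n : ℕ) :
    ∀ᵐ q : ℝ, bromwich (resolventKernel v p n · q) =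
      (Ici 0).indicator fun t : ℝ ↦ exp (I * t * (q : ℂ) ^ 2) * dysonKernel v n t p q := by
  induction n with
  | zero =>
    filter_upwards [Measure.ae_ne volume p, Measure.ae_ne volume (-p)] with q hq hq'
    have hpq : p ^ 2 ≠ q ^ 2 := fun h ↦ (sq_eq_sq_iff_eq_or_eq_neg.1 h.symm).elim hq hq'
    ext t
    simp only [resolventKernel, bromwich_mul_const, bromwich_freeResolvent_mul_freeResolvent hpq]
    simp only [dysonKernel, indicator_apply, ite_mul, zero_mul, mul_div_assoc, mul_assoc]
  | succ n ih =>
    refine .of_forall fun q ↦ ?_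
    have hintegrable : Integrable fun y : ℝ × ℝ ↦
        resolventKernel v p n y.1 y.2 * (v (y.2 - q) / ((√(2 * π) : ℝ) : ℂ)) :=
      (hv.integrable_resolventKernel p n).mul_bdd (c := C)
        (hv.div_sqrt_two_pi.measurable.comp (by fun_prop)).aestronglyMeasurable
        (.of_forall fun y ↦ hv.div_sqrt_two_pi.norm_le _)
    simpa only [resolventKernel, dysonKernel, mul_div_assoc] using
      bromwich_freeResolvent_mul_integral (m := resolventKernel v p n)
        (w := fun z ↦ v (z - q) / ((√(2 * π) : ℝ) : ℂ)) hintegrable ih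

lemma IsBoundedPotential.enorm_dysonKernel_sub_le {u : ℝ → ℂ} (hv : IsBoundedPotential v C)
    (hu : IsBoundedPotential u C) (n : ℕ) {t : ℝ} (ht : 0 ≤ t) (p : ℝ) : ∀ᵐ q : ℝ,
    ‖dysonKernel v n t p q - dysonKernel u n t p q‖ₑ ≤ ENNReal.ofReal (Real.exp t) *
      ∫⁻ x, ‖resolventKernel v p n x q - resolventKernel u p n x q‖ₑ := by
  filter_upwards [hv.bromwich_resolventKernel p n, hu.bromwich_resolventKernel p n,
    (hv.integrable_resolventKernel p n).prod_left_ae,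
    (hu.integrable_resolventKernel p n).prod_left_ae] with q hvq huq hvi hui
  refine le_trans (le_of_eq ?_) (enorm_bromwich_le _ t)
  have hsub := bromwich_sub (g := (resolventKernel v p n · q))
    (h := (resolventKernel u p n · q)) hvi hui t
  simp only [hsub, hvq, huq, indicator_of_mem (mem_Ici.2 ht)]
  rw [← mul_sub, enorm_mul, ← ofReal_norm (exp _), norm_exp_I_mul_mul_sq, ENNReal.ofReal_one,
    one_mul]

end resolventKernel

section Convergence

variable {ι : Type*} {l : Filter ι} [l.IsCountablyGenerated] {v : ℝ → ℂ} {u : ι → ℝ → ℂ} {C : ℝ}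

lemma tendsto_resolventKernel (hu : ∀ᶠ i in l, IsBoundedPotential (u i) C)
    (hlim : ∀ y, Tendsto (u · y) l (𝓝 (v y))) (p : ℝ) (n : ℕ) (x q : ℝ) :
    Tendsto (fun i ↦ resolventKernel (u i) p n x q) l (𝓝 (resolventKernel v p n x q)) := by
  induction n generalizing q with
  | zero => exact tendsto_const_nhds.mul ((hlim _).div_const _)
  | succ n ih =>
    refine tendsto_const_nhds.mul (tendsto_integral_filter_of_dominated_convergence
      (fun z ↦ C * (C * (4 * π)) ^ n * ‖freeResolvent x p‖ * C * ‖freeResolvent x z‖) ?_ ?_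
      ((integrable_freeResolvent_right x).norm.const_mul _)
      (.of_forall fun z ↦ (ih z).mul ((hlim _).div_const _)))
    · filter_upwards [hu] with i hi
      exact ((hi.stronglyMeasurable_resolventKernel p n).comp_measurable
        measurable_prodMk_left).aestronglyMeasurable.mul
        (hi.div_sqrt_two_pi.measurable.comp (measurable_id'.sub_const q)).aestronglyMeasurable
    · filter_upwards [hu] with i hi
      exact .of_forall fun z ↦
        hi.norm_resolventKernel_mul_le_of_le (hi.norm_resolventKernel_le p n x z) _

lemma tendsto_lintegral_enorm_resolventKernel_sub (hv : IsBoundedPotential v C)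
    (hu : ∀ᶠ i in l, IsBoundedPotential (u i) C) (hlim : ∀ y, Tendsto (u · y) l (𝓝 (v y)))
    (p : ℝ) (n : ℕ) :
    Tendsto (fun i ↦ ∫⁻ y : ℝ × ℝ,
      ‖resolventKernel v p n y.1 y.2 - resolventKernel (u i) p n y.1 y.2‖ₑ) l (𝓝 0) := by
  have hdom := (integrable_freeResolvent_mul p).norm.const_mul (2 * (C * (C * (4 * π)) ^ n))
  rw [← lintegral_zero (α := ℝ × ℝ) (μ := volume)]
  refine tendsto_lintegral_filter_of_dominated_convergence _ ?_ ?_ hdom.2.ne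
    (.of_forall fun y ↦ ?_)
  · filter_upwards [hu] with i hi
    exact ((hv.stronglyMeasurable_resolventKernel p n).sub
      (hi.stronglyMeasurable_resolventKernel p n)).enorm
  · filter_upwards [hu] with i hi
    refine .of_forall fun y ↦ enorm_le_iff_norm_le.2 ?_
    have hsub := norm_sub_le_of_le (hv.norm_resolventKernel_le p n y.1 y.2)
      (hi.norm_resolventKernel_le p n y.1 y.2)
    refine hsub.trans (le_of_eq_of_le ?_ (le_abs_self _))
    rw [norm_mul]
    ring
  · simpa using ((tendsto_resolventKernel hu hlim p n y.1 y.2).const_sub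
      (resolventKernel v p n y.1 y.2)).enorm

lemma tendsto_lintegral_enorm_dysonKernel_sub_of_nonneg (hv : IsBoundedPotential v C)
    (hu : ∀ᶠ i in l, IsBoundedPotential (u i) C) (hlim : ∀ y, Tendsto (u · y) l (𝓝 (v y)))
    (n : ℕ) {t : ℝ} (ht : 0 ≤ t) (p : ℝ) :
    Tendsto (fun i ↦ ∫⁻ q, ‖dysonKernel v n t p q - dysonKernel (u i) n t p q‖ₑ) l (𝓝 0) := by
  have hbound : Tendsto (fun i ↦ ENNReal.ofReal (Real.exp t) * ∫⁻ y : ℝ × ℝ,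
      ‖resolventKernel v p n y.1 y.2 - resolventKernel (u i) p n y.1 y.2‖ₑ) l (𝓝 0) := by
    simpa using ENNReal.Tendsto.const_mul
      (tendsto_lintegral_enorm_resolventKernel_sub hv hu hlim p n) (.inr ENNReal.ofReal_ne_top)
  refine tendsto_of_tendsto_of_tendsto_of_le_of_le' tendsto_const_nhds hbound
    (.of_forall fun _ ↦ zero_le) ?_
  filter_upwards [hu] with i hi
  refine (lintegral_mono_ae (hv.enorm_dysonKernel_sub_le hi n ht p)).trans_eq ?_
  rw [lintegral_const_mul' _ _ ENNReal.ofReal_ne_top, Measure.volume_eq_prod, lintegral_prod_symm]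
  exact ((hv.stronglyMeasurable_resolventKernel p n).sub
    (hi.stronglyMeasurable_resolventKernel p n)).enorm.aemeasurable

lemma conj_exp_I_mul_sq_sub_sq (t : ℝ) (a b : ℝ) :
    conj (exp (I * t * ((a : ℂ) ^ 2 - (b : ℂ) ^ 2))) =
      exp (I * (-t : ℝ) * ((a : ℂ) ^ 2 - (b : ℂ) ^ 2)) := by
  simp [← exp_conj]

lemma phiK_neg (t p q : ℝ) : phiK (-t) p q = -conj (phiK t p q) := by
  simp only [phiK]
  split_ifs
  · simp
  · rw [map_div₀, map_sub, conj_exp_I_mul_sq_sub_sq, ← div_neg]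
    simp

lemma dysonKernel_neg (v : ℝ → ℂ) (n : ℕ) (t p q : ℝ) :
    dysonKernel v n (-t) p q =
      (-1) ^ (n + 1) * conj (dysonKernel (fun y ↦ conj (v y)) n t p q) := by
  induction n generalizing t q with
  | zero =>
    simp only [dysonKernel, phiK_neg, map_div₀, map_mul, conj_conj, conj_ofReal]
    ring
  | succ n ih =>
    simp only [dysonKernel]
    rw [← neg_zero, ← intervalIntegral.integral_comp_neg, intervalIntegral.integral_symm, neg_zero,
      pow_succ (-1 : ℂ), mul_assoc, neg_one_mul, mul_neg, ← intervalIntegral.intervalIntegral_conj,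
      ← intervalIntegral.integral_const_mul]
    congr 2 with s
    rw [← integral_conj, ← integral_const_mul]
    congr 1 with z
    simp only [ih, map_div₀, map_mul, conj_conj, conj_ofReal, conj_exp_I_mul_sq_sub_sq]
    ring

lemma enorm_dysonKernel_sub_neg (v w : ℝ → ℂ) (n : ℕ) (t p q : ℝ) :
    ‖dysonKernel v n (-t) p q - dysonKernel w n (-t) p q‖ₑ =
      ‖dysonKernel (fun y ↦ conj (v y)) n t p q - dysonKernel (fun y ↦ conj (w y)) n t p q‖ₑ := by
  rw [dysonKernel_neg, dysonKernel_neg, ← mul_sub, ← map_sub, enorm_eq_iff_norm_eq, norm_mul,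
    RCLike.norm_conj, norm_pow, norm_neg, norm_one, one_pow, one_mul]

theorem tendsto_lintegral_enorm_dysonKernel_sub (hv : IsBoundedPotential v C)
    (hu : ∀ᶠ i in l, IsBoundedPotential (u i) C) (hlim : ∀ y, Tendsto (u · y) l (𝓝 (v y)))
    (n : ℕ) (t p : ℝ) :
    Tendsto (fun i ↦ ∫⁻ q, ‖dysonKernel v n t p q - dysonKernel (u i) n t p q‖ₑ) l (𝓝 0) := by
  rcases le_total 0 t with ht | ht
  · exact tendsto_lintegral_enorm_dysonKernel_sub_of_nonneg hv hu hlim n ht p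
  · have hconj := tendsto_lintegral_enorm_dysonKernel_sub_of_nonneg hv.star
      (hu.mono fun i hi ↦ hi.star) (fun y ↦ (continuous_conj.tendsto _).comp (hlim y)) n
      (neg_nonneg.2 ht) p
    simpa only [← enorm_dysonKernel_sub_neg, neg_neg] using hconj

end Convergence

section Mollification

variable (α x₀ : ℝ) {W : ℝ → ℝ}

lemma mollPotFT_eq_deltaFT_mul_fourier (W : ℝ → ℝ) {ε : ℝ} (hε : 0 < ε) (p : ℝ) :
    mollPotFT α W x₀ ε p =
      deltaFT α x₀ p * 𝓕 (fun y ↦ (W y : ℂ)) (ε * p / (2 * π)) := by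
  have hε' : (ε : ℂ) ≠ 0 := mod_cast hε.ne'
  set g : ℝ → ℂ := fun y ↦ exp (-I * p * (ε * y)) * W y with hg
  have hintegrand (x : ℝ) : ((ε⁻¹ * W ((x - x₀) / ε) : ℝ) : ℂ) * exp (-I * p * x) =
      (ε : ℂ)⁻¹ * exp (-I * p * x₀) * g ((x - x₀) / ε) := by
    have hexp : exp (-I * p * x) = exp (-I * p * x₀) * exp (-I * p * (x - x₀)) := by
      rw [← exp_add]
      ring_nf
    simp only [hg, hexp]
    push_cast
    rw [mul_div_cancel₀ _ hε']
    ring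
  have hfourier : 𝓕 (fun y ↦ (W y : ℂ)) (ε * p / (2 * π)) = ∫ y, g y := by
    rw [Real.fourier_real_eq_integral_exp_smul]
    congr 1 with y
    rw [hg, smul_eq_mul]
    congr 2
    have : (π : ℂ) ≠ 0 := mod_cast Real.pi_ne_zero
    push_cast
    field_simp
  simp only [mollPotFT, deltaFT, hintegrand]
  rw [integral_const_mul, integral_sub_right_eq_self (fun x : ℝ ↦ g (x / ε)) x₀,
    Measure.integral_comp_div, abs_of_pos hε, real_smul, hfourier]
  field_simp

lemma isBoundedPotential_deltaFT : IsBoundedPotential (deltaFT α x₀) |α| where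
  measurable := by
    unfold deltaFT
    fun_prop
  norm_le y := by
    have hexp : ‖exp (-I * y * x₀)‖ = 1 := by simp [norm_exp]
    rw [deltaFT, norm_mul, norm_mul, norm_inv, norm_real, norm_real, hexp, mul_one,
      Real.norm_of_nonneg (Real.sqrt_nonneg _), Real.norm_eq_abs]
    exact mul_le_of_le_one_right (abs_nonneg α) (inv_le_one_of_one_le₀ one_le_sqrt_two_pi)

lemma continuous_fourier_of_integrable {f : ℝ → ℂ} (hf : Integrable f) : Continuous (𝓕 f) :=
  VectorFourier.fourierIntegral_continuous Real.continuous_fourierChar (by fun_prop) hf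

lemma isBoundedPotential_mollPotFT (hW : Integrable W) {ε : ℝ} (hε : 0 < ε) :
    IsBoundedPotential (mollPotFT α W x₀ ε) (|α| * ∫ x, ‖W x‖) := by
  have hδ := isBoundedPotential_deltaFT α x₀
  rw [funext (mollPotFT_eq_deltaFT_mul_fourier α x₀ W hε)]
  refine ⟨hδ.measurable.mul
    ((continuous_fourier_of_integrable hW.ofReal).comp (by fun_prop)).measurable, fun p ↦ ?_⟩
  refine norm_mul_le_of_le (hδ.norm_le p)
    ((VectorFourier.norm_fourierIntegral_le_integral_norm ..).trans_eq ?_)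
  simp only [norm_real]

lemma tendsto_mollPotFT (hW : Integrable W) (hWint : ∫ x, W x = 1) (p : ℝ) :
    Tendsto (fun ε ↦ mollPotFT α W x₀ ε p) (𝓝[>] 0) (𝓝 (deltaFT α x₀ p)) := by
  have hcont : Continuous fun ε : ℝ ↦
      deltaFT α x₀ p * 𝓕 (fun y ↦ (W y : ℂ)) (ε * p / (2 * π)) :=
    continuous_const.mul ((continuous_fourier_of_integrable hW.ofReal).comp (by fun_prop))
  have hzero : 𝓕 (fun y ↦ (W y : ℂ)) (0 * p / (2 * π)) = 1 := by
    have hofReal : ∫ x, (W x : ℂ) = 1 := by rw [integral_complex_ofReal, hWint, ofReal_one]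
    simpa [Real.fourier_real_eq_integral_exp_smul] using hofReal
  have htendsto := hcont.tendsto 0
  rw [hzero, mul_one] at htendsto
  refine (htendsto.mono_left nhdsWithin_le_nhds).congr' ?_
  filter_upwards [self_mem_nhdsWithin] with ε hε
  exact (mollPotFT_eq_deltaFT_mul_fourier α x₀ W hε p).symm

end Mollification

end

theorem dysonKernel_delta_L1_tendsto_general (α x₀ : ℝ) {W : ℝ → ℝ} (hWint : ∫ x, W x = 1)
    (n : ℕ) (t p : ℝ) :
    Tendsto (fun ε ↦ ∫⁻ q, ‖dysonKernel (deltaFT α x₀) n t p q -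
      dysonKernel (mollPotFT α W x₀ ε) n t p q‖ₑ) (𝓝[>] 0) (𝓝 0) := by
  have hW : Integrable W := .of_integral_ne_zero (hWint ▸ one_ne_zero)
  have hone : 1 ≤ ∫ x, ‖W x‖ :=
    hWint ▸ (Real.le_norm_self _).trans (norm_integral_le_integral_norm W)
  have hδ : IsBoundedPotential (deltaFT α x₀) (|α| * ∫ x, ‖W x‖) :=
    (isBoundedPotential_deltaFT α x₀).mono (le_mul_of_one_le_right (abs_nonneg α) hone)
  have hmoll : ∀ᶠ ε in 𝓝[>] 0, IsBoundedPotential (mollPotFT α W x₀ ε) (|α| * ∫ x, ‖W x‖) :=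
    eventually_mem_nhdsWithin.mono fun _ ↦ isBoundedPotential_mollPotFT α x₀ hW
  exact tendsto_lintegral_enorm_dysonKernel_sub hδ hmoll (tendsto_mollPotFT α x₀ hW hWint) n t p

/-- Inductive content of the proof of Theorem 3.1: for each `n ≥ 1`
(`dysonKernel · (n-1)` being `K_{·,n}`), each `t` and each `p`, the `L¹`-in-`q` distance
between the Dyson kernels of the delta potential and of its mollification tends to `0`
as `ε → 0⁺`. -/
theorem dysonKernel_delta_L1_tendsto (α : ℝ) (hα : α ≠ 0) (x₀ : ℝ)
    (W : ℝ → ℝ) (hWc : Continuous W) (hWs : HasCompactSupport W)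
    (hWnn : ∀ x, 0 ≤ W x) (hWint : (∫ x : ℝ, W x) = 1) :
    ∀ n : ℕ, ∀ t p : ℝ, Tendsto
      (fun ε : ℝ => ∫⁻ q : ℝ,
        (‖dysonKernel (deltaFT α x₀) n t p q -
            dysonKernel (mollPotFT α W x₀ ε) n t p q‖₊ : ENNReal))
      (𝓝[>] 0) (𝓝 0) :=
  dysonKernel_delta_L1_tendsto_general α x₀ hWint
end

section
/- Let α ∈ ℝ \ {0}, x₀ ∈ ℝ, and let W : ℝ → ℝ be continuous, compactly supported, nonnegative, with ∫_ℝ W(x) dx = 1. Set v_α(p) = α (2π)^{-1/2} e^{−ipx₀} and v_ε(p) = α · (2π)^{-1/2} ∫_ℝ ε⁻¹ W((x − x₀)/ε) e^{−ipx} dx for ε > 0. With K_{t,n}[·] the recursively defined Dyson kernels, for every n ≥ 1 and every t ∈ ℝ, the quantity sup_{p∈ℝ} ∫_ℝ |K_{t,n}[v_α](p,q) − K_{t,n}[v_ε](p,q)| dq converges to 0 as ε → 0⁺. -/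
open MeasureTheory Filter Topology

/-!
A Dyson kernel is a truncated Fourier transform in time, at the frequency `q²`, of a source in which
momenta `y` oscillate with frequency `y²`. Integrating by parts in time, each Duhamel integral gains
a factor `1 / (1 + |y² - q²|)`; both boundary terms are again truncated Fourier transforms of the
previous source, so the argument iterates. In the coordinates `y ± q` this gain remains
integrable after multiplication by `1 + √|y - q|`, which gives a Schur bound with a square root
weight in the transferred momentum to spare.

Bounded potentials which converge locally uniformly converge uniformly relative to that weight.
Replacing one potential by the other, one scattering at a time, changes the rows of the kernel by
`o(1)` in `L¹`, uniformly in `p`. For the mollified potential, the change of variables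
`x ↦ x₀ + ε x` exhibits its Fourier transform as a jointly continuous function of `(ε, p)` which
equals that of the delta potential at `ε = 0`.
-/

open Set
open scoped NNReal ENNReal FourierTransform

section Prelim

variable {E : Type*} [NormedAddCommGroup E]

lemma integrable_prod_of_enorm_le {X Y : Type*} [MeasurableSpace X] [MeasurableSpace Y]
    {μ : Measure X} {ν : Measure Y} [IsFiniteMeasure μ] [SFinite ν] {F : X × Y → E}
    (hF : AEStronglyMeasurable F (μ.prod ν)) {M : Y → ℝ≥0∞} (hM : ∫⁻ y, M y ∂ν ≠ ∞)
    (hFM : ∀ᵐ x ∂μ, ∀ y, ‖F (x, y)‖ₑ ≤ M y) : Integrable F (μ.prod ν) := by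
  refine ⟨hF, ?_⟩
  rw [hasFiniteIntegral_iff_enorm, lintegral_prod _ hF.enorm]
  calc ∫⁻ x, ∫⁻ y, ‖F (x, y)‖ₑ ∂ν ∂μ
      ≤ ∫⁻ _, ∫⁻ y, M y ∂ν ∂μ := lintegral_mono_ae (hFM.mono fun _ hx => lintegral_mono hx)
    _ < ∞ := by
        rw [lintegral_const]
        exact ENNReal.mul_lt_top hM.lt_top (measure_lt_top _ _)

variable [NormedSpace ℝ E]

lemma enorm_intervalIntegral_le {f : ℝ → E} {a b : ℝ} {M : ℝ≥0∞}
    (hf : ∀ s ∈ uIoc a b, ‖f s‖ₑ ≤ M) : ‖∫ s in a..b, f s‖ₑ ≤ ENNReal.ofReal |b - a| * M := by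
  calc ‖∫ s in a..b, f s‖ₑ = ‖∫ s in uIoc a b, f s‖ₑ := by
        simp only [← ofReal_norm, intervalIntegral.norm_intervalIntegral_eq]
    _ ≤ ∫⁻ s in uIoc a b, ‖f s‖ₑ := enorm_integral_le_lintegral_enorm _
    _ ≤ ∫⁻ _ in uIoc a b, M := setLIntegral_mono measurable_const hf
    _ = ENNReal.ofReal |b - a| * M := by rw [setLIntegral_const, Real.volume_uIoc, mul_comm]

lemma abs_le_abs_of_mem_uIoc_zero {s t : ℝ} (hs : s ∈ uIoc 0 t) : |s| ≤ |t| := by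
  simpa using abs_sub_left_of_mem_uIcc (uIoc_subset_uIcc hs)

lemma stronglyMeasurable_primitive {X : Type*} [MeasurableSpace X] {f : ℝ × X → E}
    (hf : StronglyMeasurable f) :
    StronglyMeasurable fun x : ℝ × X => ∫ s in (0 : ℝ)..x.1, f (s, x.2) := by
  have rescale (x : ℝ × X) :
      ∫ s in (0 : ℝ)..x.1, f (s, x.2) = x.1 • ∫ s in Ioc (0 : ℝ) 1, f (x.1 * s, x.2) := by
    rw [← intervalIntegral.integral_of_le zero_le_one,
      intervalIntegral.smul_integral_comp_mul_left (fun s => f (s, x.2)), mul_zero, mul_one]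
  simp only [rescale]
  exact measurable_fst.stronglyMeasurable.smul
    (hf.comp_measurable (g := fun y : (ℝ × X) × ℝ => (y.1.1 * y.2, y.1.2))
      (by fun_prop)).integral_prod_right'

lemma tendstoLocallyUniformly_of_continuous_uncurry {X Y Z : Type*} [TopologicalSpace X]
    [TopologicalSpace Y] [UniformSpace Z] {F : X → Y → Z}
    (hF : Continuous (Function.uncurry F)) (x : X) :
    TendstoLocallyUniformly F (F x) (𝓝 x) := by
  refine tendstoLocallyUniformly_iff_forall_tendsto.2 fun y => ?_
  rw [← nhds_prod_eq]
  have h : Continuous fun z : X × Y => (F x z.2, F z.1 z.2) := by fun_prop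
  exact (h.tendsto (x, y)).mono_right (nhds_le_uniformity (F x y))

end Prelim

section Oscillation

/-- The Fourier integral over `[0, t]` of a function of time, at the frequency `ω`. -/
noncomputable def truncFourier (f : ℝ → ℂ) (t ω : ℝ) : ℂ :=
  ∫ s in (0 : ℝ)..t, f s * Circle.exp (-(s * ω))

/-- The Duhamel integral `∫₀ᵗ e^{i(t-s)ω} f(s) ds`, which solves `x' = iωx + f`, `x(0) = 0`. -/
noncomputable def duhamel (f : ℝ → ℂ) (ω t : ℝ) : ℂ :=
  truncFourier f t ω * Circle.exp (t * ω)

/-- The bound `1 / (1 + |ω|)` for the gain from integrating an oscillation of frequency `ω`. -/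
noncomputable def freqDecay (ω : ℝ) : ℝ≥0∞ := (ENNReal.ofReal (1 + |ω|))⁻¹

lemma coe_circleExp_mul_coe_circleExp (x y : ℝ) :
    (Circle.exp x : ℂ) * Circle.exp y = Circle.exp (x + y) := by
  rw [Circle.exp_add, Circle.coe_mul]

lemma enorm_coe_circleExp (x : ℝ) : ‖(Circle.exp x : ℂ)‖ₑ = 1 := by
  rw [← ofReal_norm, Circle.norm_coe, ENNReal.ofReal_one]

lemma enorm_mul_circleExp (z : ℂ) (x : ℝ) : ‖z * Circle.exp x‖ₑ = ‖z‖ₑ := by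
  rw [enorm_mul, enorm_coe_circleExp, mul_one]

lemma hasDerivAt_circleExp_mul (ω s : ℝ) :
    HasDerivAt (fun s : ℝ => (Circle.exp (s * ω) : ℂ))
      (Circle.exp (s * ω) * (Complex.I * ω)) s := by
  have h : HasDerivAt (fun s : ℝ => ((s * ω : ℝ) : ℂ) * Complex.I) (Complex.I * ω) s := by
    have := ((hasDerivAt_id s).mul_const ω).ofReal_comp.mul_const Complex.I
    simpa [mul_comm] using this
  exact h.cexp

lemma truncFourier_circleExp_mul (t a b : ℝ) :
    truncFourier (fun s => Circle.exp (s * a)) t b * (Complex.I * (a - b : ℝ)) =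
      Circle.exp (t * (a - b)) - 1 := by
  have h := intervalIntegral.integral_eq_sub_of_hasDerivAt (a := 0) (b := t)
    (fun s _ => hasDerivAt_circleExp_mul (a - b) s)
    (Continuous.intervalIntegrable (by fun_prop) _ _)
  rw [zero_mul, Circle.exp_zero, Circle.coe_one] at h
  rw [truncFourier, ← intervalIntegral.integral_mul_const, ← h]
  congr! 3
  rw [coe_circleExp_mul_coe_circleExp]
  congr 2; ring

lemma phiK_eq_truncFourier (t p q : ℝ) :
    phiK t p q = truncFourier (fun s => Circle.exp (s * p ^ 2)) t (q ^ 2) := by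
  by_cases h : p ^ 2 = q ^ 2
  · simp [phiK, truncFourier, h]
  · have h' : Complex.I * (p ^ 2 - q ^ 2 : ℝ) ≠ 0 :=
      mul_ne_zero Complex.I_ne_zero (by exact_mod_cast sub_ne_zero.2 h)
    rw [eq_div_of_mul_eq h' (truncFourier_circleExp_mul t (p ^ 2) (q ^ 2)), phiK, if_neg h,
      Circle.coe_exp]
    push_cast
    congr 3; ring

lemma continuous_truncFourier {f : ℝ → ℂ} (hf : Continuous f) (ω : ℝ) :
    Continuous fun t => truncFourier f t ω :=
  intervalIntegral.continuous_primitive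
    (fun _ _ => Continuous.intervalIntegrable (by fun_prop) _ _) 0

lemma continuous_duhamel {f : ℝ → ℂ} (hf : Continuous f) (ω : ℝ) : Continuous (duhamel f ω) :=
  (continuous_truncFourier hf ω).mul (by fun_prop)

lemma truncFourier_sub {f g : ℝ → ℂ} (hf : Continuous f) (hg : Continuous g) (t ω : ℝ) :
    truncFourier (f - g) t ω = truncFourier f t ω - truncFourier g t ω := by
  simp only [truncFourier, Pi.sub_apply, sub_mul]
  exact intervalIntegral.integral_sub (Continuous.intervalIntegrable (by fun_prop) _ _)
    (Continuous.intervalIntegrable (by fun_prop) _ _)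

lemma truncFourier_mul_const (f : ℝ → ℂ) (c : ℂ) (t ω : ℝ) :
    truncFourier (fun s => f s * c) t ω = truncFourier f t ω * c := by
  simp only [truncFourier, mul_right_comm _ c, intervalIntegral.integral_mul_const]

lemma duhamel_sub {f g : ℝ → ℂ} (hf : Continuous f) (hg : Continuous g) (ω : ℝ) :
    duhamel (f - g) ω = duhamel f ω - duhamel g ω := by
  ext t
  simp only [duhamel, truncFourier_sub hf hg, sub_mul, Pi.sub_apply]

lemma truncFourier_duhamel_mul {f : ℝ → ℂ} (hf : Continuous f) (t a b : ℝ) :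
    truncFourier (duhamel f a) t b * (Complex.I * (a - b : ℝ)) =
      truncFourier f t a * Circle.exp (t * (a - b)) - truncFourier f t b := by
  have hcont : Continuous fun s : ℝ => f s * (Circle.exp (-(s * a)) : ℂ) := by fun_prop
  have parts := intervalIntegral.integral_mul_deriv_eq_deriv_mul (a := 0) (b := t)
    (u := fun s => truncFourier f s a) (u' := fun s => f s * Circle.exp (-(s * a)))
    (fun s _ => intervalIntegral.integral_hasDerivAt_right (hcont.intervalIntegrable _ _)
      (hcont.stronglyMeasurableAtFilter _ _) hcont.continuousAt)
    (fun s _ => hasDerivAt_circleExp_mul (a - b) s) (hcont.intervalIntegrable _ _)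
    (Continuous.intervalIntegrable (by fun_prop) _ _)
  have hzero : truncFourier f 0 a = 0 := intervalIntegral.integral_same
  have hleft (s : ℝ) : duhamel f a s * Circle.exp (-(s * b)) * (Complex.I * (a - b : ℝ)) =
      truncFourier f s a * (Circle.exp (s * (a - b)) * (Complex.I * (a - b : ℝ))) := by
    rw [duhamel, mul_assoc (truncFourier f s a), coe_circleExp_mul_coe_circleExp, mul_assoc,
      ← sub_eq_add_neg, ← mul_sub]
  have hright (s : ℝ) : f s * (Circle.exp (-(s * a)) : ℂ) * Circle.exp (s * (a - b)) =
      f s * Circle.exp (-(s * b)) := by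
    rw [mul_assoc, coe_circleExp_mul_coe_circleExp, mul_sub, neg_add_eq_sub, sub_sub_cancel_left]
  simp only [hzero, zero_mul, sub_zero, hright, ← hleft] at parts
  rw [truncFourier, ← intervalIntegral.integral_mul_const, parts, truncFourier.eq_def f t b]

lemma enorm_truncFourier_le {f : ℝ → ℂ} {T : ℝ≥0} {t : ℝ} {M : ℝ≥0∞} (ht : |t| ≤ T)
    (hf : ∀ s : ℝ, |s| ≤ T → ‖f s‖ₑ ≤ M) (ω : ℝ) : ‖truncFourier f t ω‖ₑ ≤ T * M := by
  refine (enorm_intervalIntegral_le (M := M) fun s hs => ?_).trans ?_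
  · rw [enorm_mul_circleExp]
    exact hf s ((abs_le_abs_of_mem_uIoc_zero hs).trans ht)
  · rw [sub_zero]
    gcongr
    exact ENNReal.ofReal_le_of_le_toReal (by simpa using ht)

lemma enorm_duhamel (f : ℝ → ℂ) (ω t : ℝ) : ‖duhamel f ω t‖ₑ = ‖truncFourier f t ω‖ₑ :=
  enorm_mul_circleExp _ _

lemma enorm_le_freqDecay_mul {z : ℂ} {ω : ℝ} {x y : ℝ≥0∞} (hx : ‖z‖ₑ ≤ x)
    (hy : ‖z * (Complex.I * ω)‖ₑ ≤ y) : ‖z‖ₑ ≤ freqDecay ω * (x + y) := by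
  have hω : ‖Complex.I * (ω : ℂ)‖ₑ = ENNReal.ofReal |ω| := by simp [← ofReal_norm]
  rw [enorm_mul, hω] at hy
  rw [freqDecay, ← ENNReal.div_eq_inv_mul,
    ENNReal.le_div_iff_mul_le (Or.inl (ENNReal.ofReal_pos.2 (by positivity)).ne')
      (Or.inl ENNReal.ofReal_ne_top),
    ENNReal.ofReal_add zero_le_one (abs_nonneg _), mul_add, ENNReal.ofReal_one, mul_one]
  exact add_le_add hx hy

lemma enorm_truncFourier_circleExp_le {T : ℝ≥0} {t : ℝ} (ht : |t| ≤ T) (a b : ℝ) :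
    ‖truncFourier (fun s => Circle.exp (s * a)) t b‖ₑ ≤ freqDecay (a - b) * ((T + 1) * 2) := by
  have hcrude : ‖truncFourier (fun s => Circle.exp (s * a)) t b‖ₑ ≤ T * 1 :=
    enorm_truncFourier_le ht (fun s _ => (enorm_coe_circleExp _).le) b
  have hphase : ‖(Circle.exp (t * (a - b)) : ℂ) - 1‖ₑ ≤ 2 := by
    refine enorm_sub_le.trans_eq ?_
    rw [enorm_coe_circleExp, enorm_one, one_add_one_eq_two]
  rw [← truncFourier_circleExp_mul] at hphase
  refine (enorm_le_freqDecay_mul hcrude hphase).trans ?_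
  rw [add_mul, one_mul]
  gcongr
  norm_num

lemma enorm_truncFourier_duhamel_le {f : ℝ → ℂ} (hf : Continuous f) {T : ℝ≥0} {t a b : ℝ}
    {x y : ℝ≥0∞} (ht : |t| ≤ T) (hx : ∀ s : ℝ, |s| ≤ T → ‖truncFourier f s a‖ₑ ≤ x)
    (hy : ‖truncFourier f t b‖ₑ ≤ y) :
    ‖truncFourier (duhamel f a) t b‖ₑ ≤ freqDecay (a - b) * ((T + 1) * (x + y)) := by
  have hcrude : ‖truncFourier (duhamel f a) t b‖ₑ ≤ T * x :=
    enorm_truncFourier_le ht (fun s hs => (enorm_duhamel f a s).trans_le (hx s hs)) b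
  have hparts : ‖truncFourier (duhamel f a) t b * (Complex.I * (a - b : ℝ))‖ₑ ≤ x + y := by
    rw [truncFourier_duhamel_mul hf]
    refine enorm_sub_le.trans (add_le_add ?_ hy)
    exact (enorm_mul_circleExp _ _).trans_le (hx t ht)
  refine (enorm_le_freqDecay_mul hcrude hparts).trans ?_
  rw [add_mul (T : ℝ≥0∞), one_mul]
  gcongr
  exact le_self_add

end Oscillation

section Weights

/-- The weight `1 + √|k|`, which grows at infinity yet is absorbed by `freqDecay`; bounded
potentials which are locally uniformly close are uniformly close relative to it. -/
noncomputable def sqrtWeight (k : ℝ) : ℝ≥0∞ := ENNReal.ofReal (1 + √|k|)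

lemma one_le_sqrtWeight (k : ℝ) : 1 ≤ sqrtWeight k := by
  rw [sqrtWeight, ENNReal.one_le_ofReal]
  exact le_add_of_nonneg_right (Real.sqrt_nonneg _)

lemma sqrtWeight_zero : sqrtWeight 0 = 1 := by simp [sqrtWeight]

lemma sqrtWeight_sub_comm (x y : ℝ) : sqrtWeight (x - y) = sqrtWeight (y - x) := by
  rw [sqrtWeight, abs_sub_comm, sqrtWeight]

lemma measurable_sqrtWeight : Measurable sqrtWeight := by
  unfold sqrtWeight; fun_prop

lemma measurable_freqDecay : Measurable freqDecay := by
  unfold freqDecay; fun_prop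

lemma sqrtWeight_sub_le_mul (x y z : ℝ) :
    sqrtWeight (x - z) ≤ sqrtWeight (x - y) * sqrtWeight (y - z) := by
  rw [sqrtWeight, sqrtWeight, sqrtWeight, ← ENNReal.ofReal_mul (by positivity)]
  refine ENNReal.ofReal_le_ofReal ?_
  have hprod := mul_nonneg (Real.sqrt_nonneg |x - y|) (Real.sqrt_nonneg |y - z|)
  have hsqrt : √|x - z| ≤ √|x - y| + √|y - z| := by
    refine Real.sqrt_le_iff.2 ⟨by positivity, (abs_sub_le x y z).trans ?_⟩
    rw [add_sq, Real.sq_sqrt (abs_nonneg _), Real.sq_sqrt (abs_nonneg _)]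
    linarith
  linarith

/-- The integrable profile `4 / (√|x| (1 + |x|))` dominating `resonanceKernel` in the
coordinates `y ± q`. -/
noncomputable def resonanceProfile (x : ℝ) : ℝ := 4 / (√|x| * (1 + |x|))

lemma resonanceProfile_nonneg (x : ℝ) : 0 ≤ resonanceProfile x := by
  unfold resonanceProfile; positivity

lemma one_add_div_one_add_sq_mul_sq_le {a b : ℝ} (hb : 0 < b) (hba : b ≤ a) :
    (1 + a) / (1 + a ^ 2 * b ^ 2) ≤ 4 / (b * (1 + b ^ 2)) := by
  have hbb : b ^ 2 ≤ a * b := by nlinarith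
  have h_b : b ≤ 1 + a ^ 2 * b ^ 2 := by nlinarith [sq_nonneg (b - 1), sq_nonneg (a * b - 1)]
  have h_ab : a * b ≤ 1 + a ^ 2 * b ^ 2 := by nlinarith [sq_nonneg (a * b - 1)]
  have h_ab3 : a * b ^ 3 ≤ 1 + a ^ 2 * b ^ 2 := by
    nlinarith [mul_le_mul_of_nonneg_left hbb (by nlinarith : 0 ≤ a * b)]
  have h_b3 : b ^ 3 ≤ 1 + a ^ 2 * b ^ 2 := by
    rcases le_total b 1 with h | h
    · nlinarith [pow_le_one₀ hb.le h (n := 3), sq_nonneg (a * b)]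
    · exact (le_mul_of_one_le_left (by positivity) (h.trans hba)).trans h_ab3
  rw [div_le_div_iff₀ (by positivity) (by positivity)]
  linarith

lemma one_add_sqrt_div_one_add_abs_mul_le {a b : ℝ} (ha : a ≠ 0) (hb : b ≠ 0) :
    (1 + √|a|) / (1 + |a * b|) ≤ resonanceProfile a + resonanceProfile b := by
  wlog hba : |b| ≤ |a| generalizing a b
  · have hab : √|a| ≤ √|b| := Real.sqrt_le_sqrt (le_of_not_ge hba)
    calc (1 + √|a|) / (1 + |a * b|) ≤ (1 + √|b|) / (1 + |b * a|) := by
          rw [mul_comm a b]; gcongr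
      _ ≤ resonanceProfile a + resonanceProfile b := by
          rw [add_comm (resonanceProfile a)]; exact this hb ha (le_of_not_ge hba)
  · have h := one_add_div_one_add_sq_mul_sq_le (Real.sqrt_pos.2 (abs_pos.2 hb))
      (Real.sqrt_le_sqrt hba)
    rw [Real.sq_sqrt (abs_nonneg a), Real.sq_sqrt (abs_nonneg b), ← abs_mul] at h
    exact h.trans (le_add_of_nonneg_left (resonanceProfile_nonneg a))

lemma hasDerivAt_eight_mul_arctan_sqrt {x : ℝ} (hx : 0 < x) :
    HasDerivAt (fun x => 8 * Real.arctan √x) (resonanceProfile x) x := by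
  have hvalue : resonanceProfile x = 8 * (1 / (1 + √x ^ 2) * (1 / (2 * √x))) := by
    have := Real.sqrt_pos.2 hx
    rw [resonanceProfile, abs_of_pos hx, Real.sq_sqrt hx.le]
    field_simp
    norm_num
  rw [hvalue]
  exact ((Real.hasDerivAt_sqrt hx.ne').arctan).const_mul 8

lemma integrable_resonanceProfile : Integrable resonanceProfile := by
  have hhalf : ∫ x in Ioi (0 : ℝ), resonanceProfile x = 8 * (Real.pi / 2) - 8 * Real.arctan √0 :=
    integral_Ioi_of_hasDerivAt_of_nonneg
      (by fun_prop : Continuous fun x => 8 * Real.arctan √x).continuousWithinAt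
      (fun x hx => hasDerivAt_eight_mul_arctan_sqrt hx) (fun x _ => resonanceProfile_nonneg x)
      (((Real.tendsto_arctan_atTop.mono_right nhdsWithin_le_nhds).comp
        Real.tendsto_sqrt_atTop).const_mul 8)
  have habs (x : ℝ) : resonanceProfile |x| = resonanceProfile x := by
    simp only [resonanceProfile, abs_abs]
  have hfull := integral_comp_abs (f := resonanceProfile)
  simp only [habs, hhalf, Real.sqrt_zero, Real.arctan_zero, mul_zero, sub_zero] at hfull
  refine .of_integral_ne_zero ?_
  rw [hfull]
  positivity

/-- The weighted gain `(1 + √|y - q|) / (1 + |y² - q²|)` made by one Duhamel integral when the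
momentum changes from `y` to `q`. -/
noncomputable def resonanceKernel (y q : ℝ) : ℝ≥0∞ := freqDecay (y ^ 2 - q ^ 2) * sqrtWeight (y - q)

lemma measurable_resonanceKernel {X : Type*} [MeasurableSpace X] {f g : X → ℝ}
    (hf : Measurable f) (hg : Measurable g) : Measurable fun x => resonanceKernel (f x) (g x) :=
  (measurable_freqDecay.comp (by fun_prop)).mul (measurable_sqrtWeight.comp (by fun_prop))

lemma resonanceKernel_comm (y q : ℝ) : resonanceKernel y q = resonanceKernel q y := by
  rw [resonanceKernel, resonanceKernel, sqrtWeight_sub_comm, freqDecay, abs_sub_comm, ← freqDecay]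

lemma freqDecay_le_resonanceKernel (y q : ℝ) : freqDecay (y ^ 2 - q ^ 2) ≤ resonanceKernel y q :=
  le_mul_of_one_le_right zero_le (one_le_sqrtWeight _)

lemma resonanceKernel_le {y q : ℝ} (hsub : y - q ≠ 0) (hadd : y + q ≠ 0) :
    resonanceKernel y q ≤
      ENNReal.ofReal (resonanceProfile (y - q) + resonanceProfile (y + q)) := by
  rw [resonanceKernel, freqDecay, sqrtWeight, ← ENNReal.ofReal_inv_of_pos (by positivity),
    ← ENNReal.ofReal_mul (by positivity), ← div_eq_inv_mul, sq_sub_sq, mul_comm (y + q)]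
  exact ENNReal.ofReal_le_ofReal (one_add_sqrt_div_one_add_abs_mul_le hsub hadd)

/-- The Schur constant of `resonanceKernel`. -/
noncomputable def resonanceMass : ℝ≥0∞ := ⨆ q, ∫⁻ y, resonanceKernel y q

lemma lintegral_resonanceKernel_le (q : ℝ) : ∫⁻ y, resonanceKernel y q ≤ resonanceMass :=
  le_iSup (fun q => ∫⁻ y, resonanceKernel y q) q

lemma resonanceMass_ne_top : resonanceMass ≠ ∞ := by
  have hrow (q : ℝ) : ∫⁻ y, resonanceKernel y q ≤
      ENNReal.ofReal ((∫ x, resonanceProfile x) + ∫ x, resonanceProfile x) := by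
    have hint := (integrable_resonanceProfile.comp_sub_right q).add
      (integrable_resonanceProfile.comp_add_right q)
    have hae : ∀ᵐ y, resonanceKernel y q ≤
        ENNReal.ofReal (resonanceProfile (y - q) + resonanceProfile (y + q)) := by
      filter_upwards [volume.ae_ne q, volume.ae_ne (-q)] with y h₁ h₂
      exact resonanceKernel_le (sub_ne_zero.2 h₁) (add_eq_zero_iff_eq_neg.not.2 h₂)
    calc ∫⁻ y, resonanceKernel y q
        ≤ ∫⁻ y, ENNReal.ofReal (resonanceProfile (y - q) + resonanceProfile (y + q)) :=
          lintegral_mono_ae hae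
      _ = ENNReal.ofReal (∫ y, (resonanceProfile (y - q) + resonanceProfile (y + q))) :=
          (ofReal_integral_eq_lintegral_ofReal hint (.of_forall fun y =>
            add_nonneg (resonanceProfile_nonneg _) (resonanceProfile_nonneg _))).symm
      _ = ENNReal.ofReal ((∫ x, resonanceProfile x) + ∫ x, resonanceProfile x) := by
          rw [integral_add (integrable_resonanceProfile.comp_sub_right q)
            (integrable_resonanceProfile.comp_add_right q),
            integral_sub_right_eq_self resonanceProfile, integral_add_right_eq_self]
  exact ne_top_of_le_ne_top ENNReal.ofReal_ne_top (iSup_le hrow)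

/-- One step of the Schur iteration for the momentum envelope of the Dyson sources. -/
noncomputable def envelopeStep (N : ℝ → ℝ≥0∞) (q : ℝ) : ℝ≥0∞ :=
  ∫⁻ z, resonanceKernel z q * (N z + N q)

lemma measurable_envelopeStep {N : ℝ → ℝ≥0∞} (hN : Measurable N) : Measurable (envelopeStep N) := by
  have hK : Measurable fun x : ℝ × ℝ => resonanceKernel x.2 x.1 :=
    measurable_resonanceKernel measurable_snd measurable_fst
  exact Measurable.lintegral_prod_right' (f := fun x => resonanceKernel x.2 x.1 * (N x.2 + N x.1))
    (by fun_prop)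

lemma lintegral_envelopeStep_le {N : ℝ → ℝ≥0∞} (hN : Measurable N) :
    ∫⁻ q, envelopeStep N q ≤ 2 * resonanceMass * ∫⁻ q, N q := by
  have hK : Measurable fun x : ℝ × ℝ => resonanceKernel x.2 x.1 :=
    measurable_resonanceKernel measurable_snd measurable_fst
  have hKN : Measurable fun x : ℝ × ℝ => resonanceKernel x.2 x.1 * N x.2 := by fun_prop
  have hdiag : ∫⁻ q, ∫⁻ z, resonanceKernel z q * N q ≤ resonanceMass * ∫⁻ q, N q := by
    rw [← lintegral_const_mul _ hN]
    refine lintegral_mono fun q => ?_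
    rw [lintegral_mul_const _ (measurable_resonanceKernel measurable_id' measurable_const)]
    exact mul_le_mul_left (lintegral_resonanceKernel_le q) _
  have hoff : ∫⁻ q, ∫⁻ z, resonanceKernel z q * N z = ∫⁻ q, ∫⁻ z, resonanceKernel z q * N q := by
    rw [lintegral_lintegral_swap hKN.aemeasurable]
    simp only [resonanceKernel_comm]
  calc ∫⁻ q, envelopeStep N q
      = ∫⁻ q, ((∫⁻ z, resonanceKernel z q * N z) + ∫⁻ z, resonanceKernel z q * N q) := by
        refine lintegral_congr fun q => ?_
        simp only [envelopeStep, mul_add]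
        exact lintegral_add_left (hKN.comp (measurable_prodMk_left (x := q))) _
    _ = (∫⁻ q, ∫⁻ z, resonanceKernel z q * N z) + ∫⁻ q, ∫⁻ z, resonanceKernel z q * N q :=
        lintegral_add_left hKN.lintegral_prod_right' _
    _ ≤ 2 * resonanceMass * ∫⁻ q, N q := by
        rw [hoff, ← two_mul, mul_assoc]
        gcongr

/-- The momentum envelope of the `n`-th Dyson source started at momentum `p`. -/
noncomputable def envelope (p : ℝ) (n : ℕ) : ℝ → ℝ≥0∞ := envelopeStep^[n] (resonanceKernel p)

lemma envelope_succ (p : ℝ) (n : ℕ) : envelope p (n + 1) = envelopeStep (envelope p n) :=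
  Function.iterate_succ_apply' _ _ _

lemma measurable_envelope (p : ℝ) (n : ℕ) : Measurable (envelope p n) := by
  induction n with
  | zero => exact measurable_resonanceKernel measurable_const measurable_id
  | succ n ih => exact envelope_succ p n ▸ measurable_envelopeStep ih

lemma lintegral_envelope_le (p : ℝ) (n : ℕ) :
    ∫⁻ q, envelope p n q ≤ (2 * resonanceMass) ^ n * resonanceMass := by
  induction n with
  | zero =>
    simpa only [envelope, Function.iterate_zero, id, resonanceKernel_comm p, pow_zero, one_mul]
      using lintegral_resonanceKernel_le p
  | succ n ih =>
    calc ∫⁻ q, envelope p (n + 1) q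
        ≤ 2 * resonanceMass * ∫⁻ q, envelope p n q :=
          envelope_succ p n ▸ lintegral_envelopeStep_le (measurable_envelope p n)
      _ ≤ (2 * resonanceMass) ^ (n + 1) * resonanceMass := by
          rw [pow_succ', mul_assoc (2 * resonanceMass) (_ ^ n)]
          gcongr

lemma resonanceMass_pow_mul_ne_top (n : ℕ) : (2 * resonanceMass) ^ n * resonanceMass ≠ ∞ :=
  ENNReal.mul_ne_top (ENNReal.pow_ne_top (ENNReal.mul_ne_top ENNReal.ofNat_ne_top
    resonanceMass_ne_top)) resonanceMass_ne_top

end Weights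

section Sources

variable {f g : ℝ → ℝ → ℂ} {u v : ℝ → ℂ} {A : ℝ≥0} {c d : ℝ≥0 → ℝ≥0} {N : ℝ → ℝ≥0∞}

/-- The source of the next Duhamel integral: each momentum `y` is propagated in time from the
source `f · y` and then scattered to `z` by the potential `u`. -/
noncomputable def nextSource (u : ℝ → ℂ) (f : ℝ → ℝ → ℂ) (s z : ℝ) : ℂ :=
  ∫ y, duhamel (fun r => f r y) (y ^ 2) s * u (y - z)

/-- The functions whose truncated Fourier transforms in time are the Dyson kernels, see
`dysonKernel_eq_truncFourier`. -/
noncomputable def dysonSource (u : ℝ → ℂ) (p : ℝ) : ℕ → ℝ → ℝ → ℂ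
  | 0 => fun s z => Circle.exp (s * p ^ 2) * u (p - z)
  | n + 1 => nextSource u (dysonSource u p n)

lemma dysonKernel_eq_truncFourier (v : ℝ → ℂ) (n : ℕ) (t p q : ℝ) :
    dysonKernel v n t p q =
      truncFourier (fun s => dysonSource (fun k => v k / (√(2 * Real.pi) : ℝ)) p n s q) t
        (q ^ 2) := by
  induction n generalizing t q with
  | zero =>
    simp only [dysonKernel, dysonSource, truncFourier_mul_const, phiK_eq_truncFourier,
      mul_div_assoc]
  | succ n ih =>
    have hphase (s z : ℝ) : Complex.exp (Complex.I * s * ((z : ℂ) ^ 2 - (q : ℂ) ^ 2)) =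
        Circle.exp (s * z ^ 2) * Circle.exp (-(s * q ^ 2)) := by
      rw [coe_circleExp_mul_coe_circleExp, Circle.coe_exp]
      push_cast
      congr 1; ring
    simp only [dysonKernel, dysonSource, nextSource, truncFourier.eq_def _ t,
      ← integral_mul_const, duhamel, ih, hphase]
    congr! 4
    ring

lemma measurable_duhamel {X : Type*} [MeasurableSpace X] {f : ℝ → X → ℂ} {ω : X → ℝ}
    (hf : Measurable (Function.uncurry f)) (hω : Measurable ω) :
    Measurable fun x : ℝ × X => duhamel (fun r => f r x.2) (ω x.2) x.1 := by
  have hphase : Measurable fun x : ℝ × X => (Circle.exp (-(x.1 * ω x.2)) : ℂ) := by fun_prop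
  have hprim := (stronglyMeasurable_primitive (hf.mul hphase).stronglyMeasurable).measurable
  exact hprim.mul (by fun_prop : Measurable fun x : ℝ × X => (Circle.exp (x.1 * ω x.2) : ℂ))

lemma measurable_nextSource (hf : Measurable (Function.uncurry f)) (hu : Measurable u) :
    Measurable (Function.uncurry (nextSource u f)) := by
  have hduh := measurable_duhamel hf (ω := fun y => y ^ 2) (by fun_prop)
  have hint : Measurable fun x : (ℝ × ℝ) × ℝ =>
      duhamel (fun r => f r x.2) (x.2 ^ 2) x.1.1 * u (x.2 - x.1.2) :=
    (hduh.comp (by fun_prop : Measurable fun x : (ℝ × ℝ) × ℝ => (x.1.1, x.2))).mul (by fun_prop)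
  exact hint.stronglyMeasurable.integral_prod_right'.measurable

/-- Sources `f s z` whose truncated Fourier transforms at the frequency `q²` are dominated,
uniformly in `z` and in times `|t| ≤ T`, by an integrable envelope `c T * N q`. -/
structure Enveloped (f : ℝ → ℝ → ℂ) (c : ℝ≥0 → ℝ≥0) (N : ℝ → ℝ≥0∞) : Prop where
  measurable : Measurable (Function.uncurry f)
  continuous : ∀ z, Continuous fun s => f s z
  measurable_envelope : Measurable N
  lintegral_ne_top : ∫⁻ q, N q ≠ ∞
  enorm_le : ∀ ⦃T : ℝ≥0⦄ ⦃t : ℝ⦄, |t| ≤ (T : ℝ) → ∀ z q : ℝ,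
    ‖truncFourier (fun s => f s z) t (q ^ 2)‖ₑ ≤ c T * N q

namespace Enveloped

lemma enorm_duhamel_mul_le (hf : Enveloped f c N) (hA : ∀ k, ‖u k‖ₑ ≤ A) {T : ℝ≥0} {t : ℝ}
    (ht : |t| ≤ (T : ℝ)) (y z : ℝ) :
    ‖duhamel (fun r => f r y) (y ^ 2) t * u (y - z)‖ₑ ≤ c T * N y * A := by
  rw [enorm_mul, enorm_duhamel]
  exact mul_le_mul' (hf.enorm_le ht y y) (hA _)

lemma lintegral_dominating_ne_top (hf : Enveloped f c N) (A T : ℝ≥0) :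
    ∫⁻ y, c T * N y * A ≠ ∞ := by
  rw [lintegral_mul_const _ (hf.measurable_envelope.const_mul _),
    lintegral_const_mul _ hf.measurable_envelope]
  exact ENNReal.mul_ne_top (ENNReal.mul_ne_top ENNReal.coe_ne_top hf.lintegral_ne_top)
    ENNReal.coe_ne_top

lemma measurable_integrand (hf : Enveloped f c N) (hu : Measurable u) (z : ℝ) :
    Measurable fun x : ℝ × ℝ => duhamel (fun r => f r x.2) (x.2 ^ 2) x.1 * u (x.2 - z) :=
  (measurable_duhamel hf.measurable (ω := fun y => y ^ 2) (by fun_prop)).mul (by fun_prop)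

lemma continuous_nextSource (hf : Enveloped f c N) (hu : Measurable u) (hA : ∀ k, ‖u k‖ₑ ≤ A)
    (z : ℝ) : Continuous fun s => nextSource u f s z := by
  refine continuous_iff_continuousAt.2 fun s₀ => ?_
  set T : ℝ≥0 := ‖s₀‖₊ + 1
  have hnhds : ∀ᶠ s in 𝓝 s₀, |s| ≤ (T : ℝ) :=
    continuous_abs.continuousAt.eventually_le_const (lt_add_one |s₀|)
  have hdom := hf.lintegral_dominating_ne_top A T
  have hmeas : Measurable fun y => c T * N y * A :=
    (hf.measurable_envelope.const_mul _).mul_const _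
  refine continuousAt_of_dominated (bound := fun y => (c T * N y * A).toReal) ?_ ?_
    (integrable_toReal_of_lintegral_ne_top hmeas.aemeasurable hdom) ?_
  · exact .of_forall fun s =>
      ((hf.measurable_integrand hu z).comp measurable_prodMk_left).aestronglyMeasurable
  · filter_upwards [hnhds] with s hs
    filter_upwards [ae_lt_top hmeas hdom] with y hy
    rw [← toReal_enorm]
    exact ENNReal.toReal_mono hy.ne (hf.enorm_duhamel_mul_le hA hs y z)
  · exact .of_forall fun y =>
      ((continuous_duhamel (hf.continuous y) _).mul continuous_const).continuousAt

lemma integrable_truncFourier_mul (hf : Enveloped f c N) (hu : Measurable u)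
    (hA : ∀ k, ‖u k‖ₑ ≤ A) (t z ω : ℝ) :
    Integrable (fun x : ℝ × ℝ => duhamel (fun r => f r x.2) (x.2 ^ 2) x.1 * u (x.2 - z) *
      Circle.exp (-(x.1 * ω))) ((volume.restrict (uIoc 0 t)).prod volume) := by
  have hphase : Measurable fun x : ℝ × ℝ => (Circle.exp (-(x.1 * ω)) : ℂ) := by fun_prop
  have : IsFiniteMeasure (volume.restrict (uIoc 0 t)) :=
    inferInstanceAs (IsFiniteMeasure (volume.restrict (Ioc _ _)))
  refine integrable_prod_of_enorm_le
    ((hf.measurable_integrand hu z).mul hphase).aestronglyMeasurable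
    (hf.lintegral_dominating_ne_top A ‖t‖₊) ?_
  filter_upwards [ae_restrict_mem measurableSet_uIoc] with s hs y
  rw [enorm_mul_circleExp]
  exact hf.enorm_duhamel_mul_le hA (abs_le_abs_of_mem_uIoc_zero hs) y z

lemma truncFourier_nextSource (hf : Enveloped f c N) (hu : Measurable u)
    (hA : ∀ k, ‖u k‖ₑ ≤ A) (t z ω : ℝ) :
    truncFourier (fun s => nextSource u f s z) t ω =
      ∫ y, truncFourier (duhamel (fun r => f r y) (y ^ 2)) t ω * u (y - z) := by
  simp only [truncFourier.eq_def _ t, nextSource, ← integral_mul_const,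
    ← intervalIntegral.integral_mul_const]
  rw [intervalIntegral_integral_swap (hf.integrable_truncFourier_mul hu hA t z ω)]
  simp only [mul_right_comm]

lemma integrable_truncFourier_propagator_mul (hf : Enveloped f c N) (hu : Measurable u)
    (hA : ∀ k, ‖u k‖ₑ ≤ A) (t z ω : ℝ) :
    Integrable fun y => truncFourier (duhamel (fun r => f r y) (y ^ 2)) t ω * u (y - z) := by
  have h := (hf.integrable_truncFourier_mul hu hA t z ω).integral_prod_right.smul
    (if 0 ≤ t then 1 else -1 : ℝ)
  refine h.congr (.of_forall fun y => ?_)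
  simp only [truncFourier.eq_def _ t, intervalIntegral.intervalIntegral_eq_integral_uIoc,
    mul_right_comm _ (u _), integral_mul_const, smul_mul_assoc, Pi.smul_apply]

lemma enorm_truncFourier_propagator_le (hf : Enveloped f c N) {T : ℝ≥0} {t : ℝ}
    (ht : |t| ≤ (T : ℝ)) (y q : ℝ) :
    ‖truncFourier (duhamel (fun r => f r y) (y ^ 2)) t (q ^ 2)‖ₑ ≤
      freqDecay (y ^ 2 - q ^ 2) * ((T + 1) * (c T * (N y + N q))) := by
  rw [mul_add (c T : ℝ≥0∞)]
  exact enorm_truncFourier_duhamel_le (hf.continuous y) ht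
    (fun s hs => hf.enorm_le hs y y) (hf.enorm_le ht y q)

end Enveloped

lemma enveloped_nextSource (hf : Enveloped f c N) (hu : Measurable u) (hA : ∀ k, ‖u k‖ₑ ≤ A) :
    Enveloped (nextSource u f) (fun T => A * (T + 1) * c T) (envelopeStep N) where
  measurable := measurable_nextSource hf.measurable hu
  continuous := hf.continuous_nextSource hu hA
  measurable_envelope := measurable_envelopeStep hf.measurable_envelope
  lintegral_ne_top := ne_top_of_le_ne_top
    (ENNReal.mul_ne_top (ENNReal.mul_ne_top ENNReal.ofNat_ne_top resonanceMass_ne_top)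
      hf.lintegral_ne_top) (lintegral_envelopeStep_le hf.measurable_envelope)
  enorm_le T t ht z q := by
    rw [hf.truncFourier_nextSource hu hA, envelopeStep,
      ← lintegral_const_mul' _ _ ENNReal.coe_ne_top]
    refine (enorm_integral_le_lintegral_enorm _).trans (lintegral_mono fun y => ?_)
    calc ‖truncFourier (duhamel (fun r => f r y) (y ^ 2)) t (q ^ 2) * u (y - z)‖ₑ
        ≤ resonanceKernel y q * ((T + 1) * (c T * (N y + N q))) * A := by
          rw [enorm_mul]
          refine mul_le_mul' ((hf.enorm_truncFourier_propagator_le ht y q).trans ?_) (hA _)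
          gcongr
          exact freqDecay_le_resonanceKernel y q
      _ = (A * (T + 1) * c T : ℝ≥0) * (resonanceKernel y q * (N y + N q)) := by
          push_cast; ring

lemma enveloped_dysonSource (hu : Measurable u) (hA : ∀ k, ‖u k‖ₑ ≤ A) (p : ℝ) (n : ℕ) :
    Enveloped (dysonSource u p n) (fun T => 2 * (A * (T + 1)) ^ (n + 1)) (envelope p n) := by
  induction n with
  | zero =>
    refine ⟨?_, fun z => ?_, measurable_envelope p 0,
      ne_top_of_le_ne_top (resonanceMass_pow_mul_ne_top 0) (lintegral_envelope_le p 0),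
      fun T t ht z q => ?_⟩
    · have hphase : Measurable fun x : ℝ × ℝ => (Circle.exp (x.1 * p ^ 2) : ℂ) := by fun_prop
      exact hphase.mul (by fun_prop)
    · have hphase : Continuous fun s : ℝ => (Circle.exp (s * p ^ 2) : ℂ) := by fun_prop
      exact hphase.mul continuous_const
    · simp only [dysonSource, truncFourier_mul_const, enorm_mul]
      calc _ ≤ resonanceKernel p q * ((T + 1) * 2) * A :=
            mul_le_mul' ((enorm_truncFourier_circleExp_le ht _ _).trans
              (mul_le_mul_left (freqDecay_le_resonanceKernel p q) _)) (hA _)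
        _ = (2 * (A * (T + 1)) ^ (0 + 1) : ℝ≥0) * envelope p 0 q := by
            rw [envelope, Function.iterate_zero, id, zero_add, pow_one]
            push_cast; ring
  | succ n ih =>
    rw [dysonSource, envelope_succ]
    convert enveloped_nextSource ih hu hA using 2
    ring

/-- Closeness of the truncated Fourier transforms of two sources, up to the loss of
`sqrtWeight (q - z)` between the momentum `z` and the frequency `q²`. -/
def WeightedClose (f g : ℝ → ℝ → ℂ) (δ : ℝ≥0) (d : ℝ≥0 → ℝ≥0) (N : ℝ → ℝ≥0∞) : Prop :=
  ∀ ⦃T : ℝ≥0⦄ ⦃t : ℝ⦄, |t| ≤ (T : ℝ) → ∀ z q : ℝ,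
    ‖truncFourier (fun s => f s z) t (q ^ 2) - truncFourier (fun s => g s z) t (q ^ 2)‖ₑ ≤
      δ * (sqrtWeight (q - z) * (d T * N q))

lemma WeightedClose.enorm_truncFourier_propagator_sub_le {δ : ℝ≥0} (hfg : WeightedClose f g δ d N)
    (hf : ∀ z, Continuous fun s => f s z) (hg : ∀ z, Continuous fun s => g s z) {T : ℝ≥0} {t : ℝ}
    (ht : |t| ≤ (T : ℝ)) (y q : ℝ) :
    ‖truncFourier (duhamel (fun r => f r y) (y ^ 2)) t (q ^ 2) -
        truncFourier (duhamel (fun r => g r y) (y ^ 2)) t (q ^ 2)‖ₑ ≤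
      δ * ((T + 1) * d T * (resonanceKernel y q * (N y + N q))) := by
  have hdiff (s ω : ℝ) : truncFourier ((fun r => f r y) - fun r => g r y) s ω =
      truncFourier (fun r => f r y) s ω - truncFourier (fun r => g r y) s ω :=
    truncFourier_sub (hf y) (hg y) s ω
  have hdiag (s : ℝ) (hs : |s| ≤ (T : ℝ)) :
      ‖truncFourier ((fun r => f r y) - fun r => g r y) s (y ^ 2)‖ₑ ≤ δ * (d T * N y) := by
    simpa only [hdiff, sub_self, sqrtWeight_zero, one_mul] using hfg hs y y
  have hoff : ‖truncFourier ((fun r => f r y) - fun r => g r y) t (q ^ 2)‖ₑ ≤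
      δ * (sqrtWeight (y - q) * (d T * N q)) := by
    simpa only [hdiff, sqrtWeight_sub_comm y] using hfg ht y q
  rw [← truncFourier_sub (continuous_duhamel (hf y) _) (continuous_duhamel (hg y) _),
    ← duhamel_sub (hf y) (hg y)]
  calc _ ≤ freqDecay (y ^ 2 - q ^ 2) *
        ((T + 1) * (δ * (d T * N y) + δ * (sqrtWeight (y - q) * (d T * N q)))) :=
        enorm_truncFourier_duhamel_le ((hf y).sub (hg y)) ht hdiag hoff
    _ = δ * ((T + 1) * d T *
        (freqDecay (y ^ 2 - q ^ 2) * N y + resonanceKernel y q * N q)) := by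
        rw [resonanceKernel]; ring
    _ ≤ δ * ((T + 1) * d T * (resonanceKernel y q * (N y + N q))) := by
        rw [mul_add (resonanceKernel y q)]
        gcongr
        exact freqDecay_le_resonanceKernel y q

lemma WeightedClose.enorm_truncFourier_propagator_mul_sub_le {δ : ℝ≥0}
    (hfg : WeightedClose f g δ d N) (hf : ∀ z, Continuous fun s => f s z) (hg : Enveloped g c N)
    (hA : ∀ k, ‖u k‖ₑ ≤ A) (huv : ∀ k, ‖u k - v k‖ₑ ≤ δ * sqrtWeight k) {T : ℝ≥0} {t : ℝ}
    (ht : |t| ≤ (T : ℝ)) (y z q : ℝ) :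
    ‖truncFourier (duhamel (fun r => f r y) (y ^ 2)) t (q ^ 2) * u (y - z) -
        truncFourier (duhamel (fun r => g r y) (y ^ 2)) t (q ^ 2) * v (y - z)‖ₑ ≤
      δ * (sqrtWeight (q - z) * ((T + 1) * (A * d T + c T) : ℝ≥0)) *
        (resonanceKernel y q * (N y + N q)) := by
  set F := truncFourier (duhamel (fun r => f r y) (y ^ 2)) t (q ^ 2)
  set G := truncFourier (duhamel (fun r => g r y) (y ^ 2)) t (q ^ 2)
  have hFG : ‖(F - G) * u (y - z)‖ₑ ≤
      δ * ((T + 1) * d T * (resonanceKernel y q * (N y + N q))) * (sqrtWeight (q - z) * A) := by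
    rw [enorm_mul]
    exact mul_le_mul' (hfg.enorm_truncFourier_propagator_sub_le hf hg.continuous ht y q)
      ((hA _).trans (le_mul_of_one_le_left' (one_le_sqrtWeight _)))
  have hG : ‖G * (u (y - z) - v (y - z))‖ₑ ≤ freqDecay (y ^ 2 - q ^ 2) *
      ((T + 1) * (c T * (N y + N q))) * (δ * (sqrtWeight (y - q) * sqrtWeight (q - z))) := by
    rw [enorm_mul]
    exact mul_le_mul' (hg.enorm_truncFourier_propagator_le ht y q)
      ((huv _).trans (mul_le_mul_right (sqrtWeight_sub_le_mul y q z) _))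
  calc ‖F * u (y - z) - G * v (y - z)‖ₑ
      = ‖(F - G) * u (y - z) + G * (u (y - z) - v (y - z))‖ₑ := by ring_nf
    _ ≤ _ := (enorm_add_le _ _).trans (add_le_add hFG hG)
    _ = _ := by rw [resonanceKernel]; push_cast; ring

lemma WeightedClose.nextSource {δ : ℝ≥0} (hfg : WeightedClose f g δ d N) (hf : Enveloped f c N)
    (hg : Enveloped g c N) (hu : Measurable u) (hv : Measurable v) (hAu : ∀ k, ‖u k‖ₑ ≤ A)
    (hAv : ∀ k, ‖v k‖ₑ ≤ A) (huv : ∀ k, ‖u k - v k‖ₑ ≤ δ * sqrtWeight k) :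
    WeightedClose (nextSource u f) (nextSource v g) δ (fun T => (T + 1) * (A * d T + c T))
      (envelopeStep N) := by
  intro T t ht z q
  have hconst : δ * (sqrtWeight (q - z) * ((T + 1) * (A * d T + c T) : ℝ≥0)) ≠ ∞ :=
    ENNReal.mul_ne_top ENNReal.coe_ne_top
      (ENNReal.mul_ne_top ENNReal.ofReal_ne_top ENNReal.coe_ne_top)
  rw [hf.truncFourier_nextSource hu hAu, hg.truncFourier_nextSource hv hAv,
    ← integral_sub (hf.integrable_truncFourier_propagator_mul hu hAu t z _)
      (hg.integrable_truncFourier_propagator_mul hv hAv t z _),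
    envelopeStep, ← mul_assoc (sqrtWeight _), ← mul_assoc (δ : ℝ≥0∞),
    ← lintegral_const_mul' _ _ hconst]
  exact (enorm_integral_le_lintegral_enorm _).trans (lintegral_mono fun y =>
    hfg.enorm_truncFourier_propagator_mul_sub_le hf.continuous hg hAu huv ht y z q)

lemma weightedClose_dysonSource {δ : ℝ≥0} (hu : Measurable u) (hv : Measurable v)
    (hAu : ∀ k, ‖u k‖ₑ ≤ A) (hAv : ∀ k, ‖v k‖ₑ ≤ A)
    (huv : ∀ k, ‖u k - v k‖ₑ ≤ δ * sqrtWeight k) (p : ℝ) (n : ℕ) :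
    WeightedClose (dysonSource u p n) (dysonSource v p n) δ
      (fun T => 2 * (n + 1) * A ^ n * (T + 1) ^ (n + 1)) (envelope p n) := by
  induction n with
  | zero =>
    intro T t ht z q
    simp only [dysonSource, truncFourier_mul_const, ← mul_sub, enorm_mul]
    calc _ ≤ freqDecay (p ^ 2 - q ^ 2) * ((T + 1) * 2) *
          (δ * (sqrtWeight (p - q) * sqrtWeight (q - z))) :=
          mul_le_mul' (enorm_truncFourier_circleExp_le ht _ _)
            ((huv _).trans (mul_le_mul_right (sqrtWeight_sub_le_mul p q z) _))
      _ = _ := by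
          rw [envelope, Function.iterate_zero, id, resonanceKernel]
          push_cast; ring
  | succ n ih =>
    rw [dysonSource, dysonSource, envelope_succ]
    convert ih.nextSource (enveloped_dysonSource hu hAu p n) (enveloped_dysonSource hv hAv p n)
      hu hv hAu hAv huv using 2
    rw [mul_pow]
    push_cast; ring

theorem lintegral_enorm_dysonKernel_sub_le {δ : ℝ≥0} (hu : Measurable u) (hv : Measurable v)
    (hAu : ∀ k, ‖u k‖ₑ ≤ A) (hAv : ∀ k, ‖v k‖ₑ ≤ A)
    (huv : ∀ k, ‖u k - v k‖ₑ ≤ δ * sqrtWeight k) (n : ℕ) (t p : ℝ) :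
    ∫⁻ q, ‖dysonKernel u n t p q - dysonKernel v n t p q‖ₑ ≤
      δ * ((2 * (n + 1) * A ^ n * (‖t‖₊ + 1) ^ (n + 1) : ℝ≥0) *
        ((2 * resonanceMass) ^ n * resonanceMass)) := by
  have hscale : ‖((√(2 * Real.pi) : ℝ) : ℂ)⁻¹‖ₑ ≤ 1 := by
    have hpi : (1 : ℝ) ≤ √(2 * Real.pi) := Real.one_le_sqrt.2 (by linarith [Real.pi_gt_three])
    rw [← ofReal_norm, norm_inv, Complex.norm_real, Real.norm_of_nonneg (Real.sqrt_nonneg _),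
      ENNReal.ofReal_le_one]
    exact inv_le_one_of_one_le₀ hpi
  have hdiv {z : ℂ} {x : ℝ≥0∞} (hz : ‖z‖ₑ ≤ x) : ‖z / (√(2 * Real.pi) : ℝ)‖ₑ ≤ x := by
    rw [div_eq_mul_inv, enorm_mul]
    exact (mul_le_of_le_one_right' hscale).trans hz
  have hclose := weightedClose_dysonSource (hu.div_const _) (hv.div_const _)
    (fun k => hdiv (hAu k)) (fun k => hdiv (hAv k))
    (fun k => (congrArg _ (sub_div _ _ _)).ge.trans (hdiv (huv k))) p n
  have hpoint (q : ℝ) : ‖dysonKernel u n t p q - dysonKernel v n t p q‖ₑ ≤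
      δ * ((2 * (n + 1) * A ^ n * (‖t‖₊ + 1) ^ (n + 1) : ℝ≥0) * envelope p n q) := by
    simpa only [dysonKernel_eq_truncFourier, sub_self, sqrtWeight_zero, one_mul]
      using hclose (T := ‖t‖₊) le_rfl q q
  refine (lintegral_mono hpoint).trans ?_
  rw [lintegral_const_mul' _ _ ENNReal.coe_ne_top, lintegral_const_mul' _ _ ENNReal.coe_ne_top]
  gcongr
  exact lintegral_envelope_le p n

end Sources

section Limits

lemma eventually_enorm_sub_le_mul_sqrtWeight {ι : Type*} {l : Filter ι} {v : ℝ → ℂ}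
    {w : ι → ℝ → ℂ} {A : ℝ≥0} (hAv : ∀ k, ‖v k‖ₑ ≤ A) (hAw : ∀ᶠ i in l, ∀ k, ‖w i k‖ₑ ≤ A)
    (hvw : TendstoLocallyUniformly w v l) {δ : ℝ≥0} (hδ : 0 < δ) :
    ∀ᶠ i in l, ∀ k, ‖v k - w i k‖ₑ ≤ δ * sqrtWeight k := by
  set R : ℝ := (2 * A / δ) ^ 2
  have hball : ∀ᶠ i in l, ∀ k ∈ Metric.closedBall (0 : ℝ) R, edist (v k) (w i k) < δ :=
    EMetric.tendstoUniformlyOn_iff.1 (tendstoLocallyUniformly_iff_forall_isCompact.1 hvw _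
      (isCompact_closedBall 0 R)) δ (by exact_mod_cast hδ)
  filter_upwards [hball, hAw] with i hi hAi k
  rcases le_total |k| R with hk | hk
  · rw [← edist_eq_enorm_sub]
    exact (hi k (by simpa using hk)).le.trans (le_mul_of_one_le_right' (one_le_sqrtWeight k))
  · have hroot : 2 * (A : ℝ) / δ ≤ √|k| := Real.le_sqrt_of_sq_le hk
    calc ‖v k - w i k‖ₑ ≤ A + A := enorm_sub_le.trans (add_le_add (hAv k) (hAi k))
      _ = δ * (2 * A / δ : ℝ≥0) := by
          rw [← two_mul, ← ENNReal.coe_mul, mul_div_cancel₀ _ hδ.ne']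
          push_cast; rfl
      _ ≤ δ * sqrtWeight k := by
          gcongr
          rw [sqrtWeight, ← ENNReal.ofReal_coe_nnreal]
          refine ENNReal.ofReal_le_ofReal ?_
          push_cast
          linarith

theorem tendsto_iSup_lintegral_enorm_dysonKernel_sub {ι : Type*} {l : Filter ι} {v : ℝ → ℂ}
    {w : ι → ℝ → ℂ} {A : ℝ≥0} (hv : Measurable v) (hw : ∀ᶠ i in l, Measurable (w i))
    (hAv : ∀ k, ‖v k‖ₑ ≤ A) (hAw : ∀ᶠ i in l, ∀ k, ‖w i k‖ₑ ≤ A)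
    (hvw : TendstoLocallyUniformly w v l) (n : ℕ) (t : ℝ) :
    Tendsto (fun i => ⨆ p, ∫⁻ q, ‖dysonKernel v n t p q - dysonKernel (w i) n t p q‖ₑ) l
      (𝓝 0) := by
  refine ENNReal.tendsto_nhds_zero.2 fun η hη => ?_
  set C : ℝ≥0∞ := (2 * (n + 1) * A ^ n * (‖t‖₊ + 1) ^ (n + 1) : ℝ≥0) *
    ((2 * resonanceMass) ^ n * resonanceMass)
  have hC : C ≠ ∞ := ENNReal.mul_ne_top ENNReal.coe_ne_top (resonanceMass_pow_mul_ne_top n)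
  obtain ⟨δ, hδ, hδC⟩ := ENNReal.exists_nnreal_pos_mul_lt hC hη.ne'
  filter_upwards [hw, hAw, eventually_enorm_sub_le_mul_sqrtWeight hAv hAw hvw hδ]
    with i hwi hAi hclose
  exact iSup_le fun p =>
    (lintegral_enorm_dysonKernel_sub_le hv hwi hAv hAi hclose n t p).trans hδC.le

end Limits

section Mollifier

/-- The Fourier transform of the mollified potential after the change of variables
`x ↦ x₀ + ε x`; unlike `mollPotFT`, it also makes sense at `ε = 0`. -/
noncomputable def scaledPotFT (α : ℝ) (W : ℝ → ℝ) (x₀ ε p : ℝ) : ℂ :=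
  deltaFT α x₀ p * 𝓕 (fun x => (W x : ℂ)) (ε * p / (2 * Real.pi))

lemma mollPotFT_eq_scaledPotFT (α : ℝ) (W : ℝ → ℝ) (x₀ : ℝ) {ε : ℝ} (hε : 0 < ε) :
    mollPotFT α W x₀ ε = scaledPotFT α W x₀ ε := by
  ext p
  set F : ℝ → ℂ := fun y => Complex.exp (-Complex.I * p * x₀) * (ε : ℂ)⁻¹ * (Complex.exp
    (↑(-2 * Real.pi * y * (ε * p / (2 * Real.pi))) * Complex.I) • (W y : ℂ)) with hF
  have hchange (x : ℝ) : ((ε⁻¹ * W ((x - x₀) / ε) : ℝ) : ℂ) * Complex.exp (-Complex.I * p * x) =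
      F ((x - x₀) / ε) := by
    have hexp : -Complex.I * p * x = -Complex.I * p * x₀ +
        ↑(-2 * Real.pi * ((x - x₀) / ε) * (ε * p / (2 * Real.pi))) * Complex.I := by
      have : -2 * Real.pi * ((x - x₀) / ε) * (ε * p / (2 * Real.pi)) = -(p * (x - x₀)) := by
        field_simp
      rw [this]
      push_cast; ring
    rw [hexp, Complex.exp_add]
    simp only [hF, smul_eq_mul]
    push_cast; ring
  rw [mollPotFT, scaledPotFT, Real.fourier_real_eq_integral_exp_smul, deltaFT]
  simp only [hchange]
  rw [integral_sub_right_eq_self (fun x => F (x / ε)) x₀, Measure.integral_comp_div, hF,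
    integral_const_mul, abs_of_pos hε, Complex.real_smul]
  have hε' : (ε : ℂ) ≠ 0 := by exact_mod_cast hε.ne'
  rw [mul_assoc _ (ε : ℂ)⁻¹, mul_left_comm (ε : ℂ), mul_inv_cancel_left₀ hε']
  simp only [mul_assoc]

lemma scaledPotFT_zero (α x₀ : ℝ) {W : ℝ → ℝ} (hWint : ∫ x, W x = 1) :
    scaledPotFT α W x₀ 0 = deltaFT α x₀ := by
  ext p
  simp [scaledPotFT, Real.fourier_real_eq_integral_exp_smul, integral_complex_ofReal, hWint]

lemma continuous_uncurry_scaledPotFT (α x₀ : ℝ) {W : ℝ → ℝ} (hW : Integrable W) :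
    Continuous (Function.uncurry (scaledPotFT α W x₀)) := by
  have hdelta : Continuous (deltaFT α x₀) := by unfold deltaFT; fun_prop
  have hfourier : Continuous (𝓕 fun x => (W x : ℂ)) :=
    VectorFourier.fourierIntegral_continuous Real.continuous_fourierChar continuous_inner hW.ofReal
  exact (hdelta.comp continuous_snd).mul (hfourier.comp (by fun_prop))

lemma enorm_scaledPotFT_le (α : ℝ) (W : ℝ → ℝ) (x₀ ε p : ℝ) :
    ‖scaledPotFT α W x₀ ε p‖ₑ ≤
      (‖(α : ℂ) * ((√(2 * Real.pi) : ℝ) : ℂ)⁻¹‖₊ * (∫ x, ‖(W x : ℂ)‖).toNNReal : ℝ≥0) := by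
  have hphase : ‖Complex.exp (-Complex.I * p * x₀)‖ = 1 := by
    rw [show -Complex.I * p * x₀ = ((-(p * x₀) : ℝ) : ℂ) * Complex.I by push_cast; ring,
      Complex.norm_exp_ofReal_mul_I]
  have hfourier : ‖𝓕 (fun x => (W x : ℂ)) (ε * p / (2 * Real.pi))‖ ≤ ∫ x, ‖(W x : ℂ)‖ :=
    VectorFourier.norm_fourierIntegral_le_integral_norm _ _ _ _ _
  rw [enorm_le_coe, ← NNReal.coe_le_coe, coe_nnnorm, scaledPotFT, deltaFT, norm_mul, norm_mul,
    hphase, mul_one, NNReal.coe_mul, coe_nnnorm]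
  gcongr
  exact hfourier.trans (Real.le_coe_toNNReal _)

end Mollifier

theorem dysonKernel_delta_sup_L1_tendsto_general (α x₀ : ℝ) (W : ℝ → ℝ)
    (hWint : (∫ x : ℝ, W x) = 1) (n : ℕ) (t : ℝ) :
    Tendsto (fun ε : ℝ => ⨆ p : ℝ, ∫⁻ q : ℝ,
      ‖dysonKernel (deltaFT α x₀) n t p q - dysonKernel (mollPotFT α W x₀ ε) n t p q‖ₑ)
      (𝓝[>] 0) (𝓝 0) := by
  have hW : Integrable W := .of_integral_ne_zero (hWint ▸ one_ne_zero)
  have hcont := continuous_uncurry_scaledPotFT α x₀ hW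
  have hmeas (ε : ℝ) : Measurable (scaledPotFT α W x₀ ε) := (hcont.uncurry_left ε).measurable
  have hscaled := tendsto_iSup_lintegral_enorm_dysonKernel_sub (hmeas 0) (.of_forall hmeas)
    (enorm_scaledPotFT_le α W x₀ 0) (.of_forall (enorm_scaledPotFT_le α W x₀))
    (tendstoLocallyUniformly_of_continuous_uncurry hcont 0) n t
  rw [scaledPotFT_zero α x₀ hWint] at hscaled
  refine (hscaled.mono_left nhdsWithin_le_nhds).congr' ?_
  filter_upwards [self_mem_nhdsWithin] with ε hε
  rw [mollPotFT_eq_scaledPotFT α W x₀ hε]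

/-- Uniform-in-`p` convergence of row `L¹`-norms in the proof of Theorem 3.1: for each
`n ≥ 1` (`dysonKernel · (n-1)` being `K_{·,n}`) and each `t`,
`sup_p ∫ |K_{t,n}[v_α](p,q) − K_{t,n}[v_ε](p,q)| dq → 0` as `ε → 0⁺`. -/
theorem dysonKernel_delta_sup_L1_tendsto (α : ℝ) (hα : α ≠ 0) (x₀ : ℝ)
    (W : ℝ → ℝ) (hWc : Continuous W) (hWs : HasCompactSupport W)
    (hWnn : ∀ x, 0 ≤ W x) (hWint : (∫ x : ℝ, W x) = 1) :
    ∀ n : ℕ, ∀ t : ℝ, Tendsto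
      (fun ε : ℝ => ⨆ p : ℝ, ∫⁻ q : ℝ,
        (‖dysonKernel (deltaFT α x₀) n t p q -
            dysonKernel (mollPotFT α W x₀ ε) n t p q‖₊ : ENNReal))
      (𝓝[>] 0) (𝓝 0) :=
  dysonKernel_delta_sup_L1_tendsto_general α x₀ W hWint
end
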